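/- Let K be a compact Hausdorff space. Then K is a Corson compact if and only if every continuous image of K (i.e., every compact Hausdorff space L such that there is a continuous surjection from K onto L) has a retractional skeleton. -/

import Mathlib

/-!
**Corson compacta have images with skeletons.** Let `K` be embedded in `Σ(I)` and let `f : K → L` be
a continuous surjection. A countable `B ⊆ I` is admissible if restricting coordinates to `B` maps
`K` into itself and respects the fibres of `f`. A closing-off argument applied to the fibre relation
of `f` shows that admissible sets are cofinal among the countable ones
(`exists_admissible_superset`), and they are closed under unions of increasing sequences. Each
induces a retraction of `L` with metrizable range, and these retractions form a skeleton
(`hasRetractionalSkeleton_image`).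

**Conversely**, `K` itself has a skeleton `(r s)`. Let `D` be the union of the ranges of the `r s`.

If `D = K`, then `K` is Corson (`RetractionalSkeleton.isCorsonCompact_of_full`). For any set `Y` of
indices the retractions attached to the finite subsets of `Y` have a limit retraction, and induction
on the cardinality of `Y` along well-ordered exhaustions produces a map into a `Σ`-product whose
kernel is that of this limit retraction. Countable tightness of `D` ensures that a given point is
moved at only countably many steps of the exhaustion.

If some `x` is not in `D`, some image of `K` has no skeleton. Take an increasing chain of indices
`c ξ`, `ξ < ω₁`, continuous at limits, along which `r (c ξ) x` keeps changing. The points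
`X ξ = r (c ξ) x` form a copy of `ω₁` in which initial segments are cut off by continuous functions
on `K` (`RetractionalSkeleton.exists_points`). Split `ω₁` into blocks of length `ω + ω` and glue the
two limit points belonging to each block. In the quotient, these double points lie in the set
induced by any skeleton (`double_point_mem`), since a retraction preserving enough function values
on both branches must fix the common limit. Glue moreover the limit `y` of the first `ω` double points to a
cluster point of all of them. The class of `y` lies in the induced set, because it is in the closure
of countably many double points, and it is in the closure of the double points with index at least
`ω`. Countable tightness of the induced set would put it in the closure of countably many of these,
which is impossible (`exists_image_without_skeleton`).
-/

open Filter Topology TopologicalSpace Set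

universe u v

/-- A retractional skeleton in a topological space `K`: a family `r s : C(K, K)` of continuous
retractions indexed by an up-directed (nonempty) partially ordered set `Γ` such that
(i) each `r s` has metrizable range and the net `(r s x)` converges to `x`;
(ii) `s ≤ t` implies `r s ∘ r t = r t ∘ r s = r s`;
(iii) each strictly increasing sequence has a supremum `t` and `r t x = lim_n r (f n) x`. -/
structure RetractionalSkeleton (K : Type u) [TopologicalSpace K] : Type (u + 1) where
  Γ : Type u
  [po : PartialOrder Γ]
  [ne : Nonempty Γ]
  directed : ∀ s t : Γ, ∃ w, s ≤ w ∧ t ≤ w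
  r : Γ → C(K, K)
  isRetraction : ∀ s, ∀ x : K, r s (r s x) = r s x
  metrizable : ∀ s, MetrizableSpace ↥(Set.range (r s))
  tendsto_id : ∀ x : K, Tendsto (fun s => r s x) atTop (𝓝 x)
  comp_eq_of_le : ∀ s t : Γ, s ≤ t → ∀ x : K, r s (r t x) = r s x ∧ r t (r s x) = r s x
  sup_seq : ∀ f : ℕ → Γ, StrictMono f → ∃ t : Γ, IsLUB (Set.range f) t ∧
    ∀ x : K, Tendsto (fun n => r (f n) x) atTop (𝓝 (r t x))

/-- The set `D(𝔰) = ⋃ s, r s [K]` induced by a retractional skeleton. -/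
def RetractionalSkeleton.inducedSet {K : Type u} [TopologicalSpace K]
    (𝔰 : RetractionalSkeleton K) : Set K := ⋃ s, Set.range (𝔰.r s)

/-- `D` is induced by an r-skeleton in `K`. -/
def IsInducedByRSkeleton {K : Type u} [TopologicalSpace K] (D : Set K) : Prop :=
  ∃ 𝔰 : RetractionalSkeleton K, 𝔰.inducedSet = D

/-- `K` has a retractional skeleton. -/
def HasRetractionalSkeleton (K : Type u) [TopologicalSpace K] : Prop :=
  Nonempty (RetractionalSkeleton K)

/-- `K` is a Corson compact space: it is homeomorphic to a compact subset of
`Σ(Γ) = {x ∈ ℝ^Γ : x γ ≠ 0 for at most countably many γ}` for some set `Γ`. -/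
def IsCorsonCompact (K : Type u) [TopologicalSpace K] : Prop :=
  ∃ (Γ : Type u) (A : Set (Γ → ℝ)), IsCompact A ∧
    (∀ x ∈ A, {γ | x γ ≠ 0}.Countable) ∧ Nonempty (K ≃ₜ ↥A)

/-! ### General topology -/

theorem exists_denseSeq_ne {M : Type*} [TopologicalSpace M] [CompactSpace M] [T2Space M]
    [SeparableSpace C(M, ℝ)] {x y : M} (hxy : x ≠ y) :
    ∃ n, denseSeq C(M, ℝ) n x ≠ denseSeq C(M, ℝ) n y := by
  have ho : IsOpen {φ : C(M, ℝ) | φ x ≠ φ y} :=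
    isOpen_ne_fun (continuous_eval_const x) (continuous_eval_const y)
  obtain ⟨φ, h0, h1, -⟩ := exists_continuous_zero_one_of_isClosed (isClosed_singleton (x := x))
    (isClosed_singleton (x := y)) (by simpa using hxy)
  have hne : {φ : C(M, ℝ) | φ x ≠ φ y}.Nonempty := by
    refine ⟨φ, ?_⟩
    have h0 := h0 (mem_singleton x)
    have h1 := h1 (mem_singleton y)
    simp_all
  obtain ⟨n, hn⟩ := (denseRange_denseSeq C(M, ℝ)).exists_mem_open ho hne
  exact ⟨n, hn⟩

/-- A Hausdorff continuous image `M` of a compact space `Z` is metrizable as soon as the map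
factors, set-theoretically, through a continuous map into a second countable Hausdorff space. -/
theorem metrizable_of_factor {Z M E : Type*} [TopologicalSpace Z] [CompactSpace Z]
    [TopologicalSpace M] [T2Space M] [TopologicalSpace E] [T2Space E] [SecondCountableTopology E]
    (g : Z → M) (hg : Continuous g) (hs : Function.Surjective g)
    (h : Z → E) (hh : Continuous h) (hf : ∀ a b, h a = h b → g a = g b) :
    MetrizableSpace M := by
  have : CompactSpace M := hs.compactSpace hg
  have hcr : IsCompact (range h) := isCompact_range hh
  have : CompactSpace (range h) := isCompact_iff_compactSpace.1 hcr
  let h' : Z → range h := rangeFactorization h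
  have hq : IsQuotientMap h' :=
    (IsClosedMap.isQuotientMap (f := h') (Continuous.isClosedMap (by fun_prop))
      (by fun_prop) rangeFactorization_surjective)
  let k : range h → M := fun z => g z.2.choose
  have hk : k ∘ h' = g := by
    funext a
    apply hf
    exact (h' a).2.choose_spec
  have hkc : Continuous k := hq.continuous_iff.2 (hk ▸ hg)
  have hks : Function.Surjective k := by
    intro m
    obtain ⟨a, rfl⟩ := hs m
    exact ⟨h' a, congrFun hk a⟩
  -- composition with `k` embeds `C(M, ℝ)` isometrically into the separable space `C(range h, ℝ)`
  let K : C(range h, M) := ⟨k, hkc⟩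
  have hiso : Isometry (fun φ : C(M, ℝ) => φ.comp K) := by
    refine Isometry.of_dist_eq fun φ ψ => le_antisymm ?_ ?_
    · rw [ContinuousMap.dist_le dist_nonneg]
      exact fun x => ContinuousMap.dist_apply_le_dist (f := φ) (g := ψ) _
    · rw [ContinuousMap.dist_le dist_nonneg]
      intro m
      obtain ⟨z, rfl⟩ := hks m
      exact ContinuousMap.dist_apply_le_dist (f := φ.comp K) (g := ψ.comp K) z
  have : SecondCountableTopology C(M, ℝ) := hiso.isEmbedding.secondCountableTopology
  exact Metric.PiNatEmbed.TopologicalSpace.MetrizableSpace.of_countable_separating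
    (fun n : ℕ => (denseSeq C(M, ℝ) n : M → ℝ)) (fun n => by fun_prop)
    fun x y hxy => exists_denseSeq_ne hxy

theorem exists_countable_image_dense {α E : Type*} [TopologicalSpace E]
    [SecondCountableTopology E] (g : α → E) (S : Set α) :
    ∃ N ⊆ S, N.Countable ∧ g '' S ⊆ closure (g '' N) := by
  obtain ⟨t, htc, htd⟩ := TopologicalSpace.exists_countable_dense ↥(g '' S)
  have hsub : (Subtype.val '' t) ⊆ g '' S := by
    rintro _ ⟨z, -, rfl⟩
    exact z.2
  obtain ⟨N, hNS, hN⟩ := (subset_image_iff.1 hsub)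
  obtain ⟨N', hN'N, hN'c, hN'⟩ : ∃ N' ⊆ N, N'.Countable ∧ g '' N' = g '' N := by
    have hc : (g '' N).Countable := hN ▸ htc.image _
    obtain ⟨N', h1, h2⟩ := Set.SurjOn.exists_bijOn_subset (surjOn_image g N)
    refine ⟨N', h1, ?_, h2.image_eq⟩
    exact (h2.mapsTo.countable_of_injOn h2.injOn hc)
  refine ⟨N', hN'N.trans hNS, hN'c, ?_⟩
  rw [hN', hN]
  intro z hz
  have := htd ⟨z, hz⟩
  rwa [closure_subtype] at this

/-! ### Continuous images of Corson compacta have retractional skeletons -/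

section Images

variable {K L I : Type u} [TopologicalSpace K] [CompactSpace K] [TopologicalSpace L]

/-- A countable set `B` of coordinates is admissible for `f : K → L`, where `K` sits in `ℝ^I`
through `e`, if putting the coordinates outside `B` equal to zero maps `K` into itself and respects
the fibres of `f`. -/
def Admissible (e : K → I → ℝ) (f : K → L) (B : Set I) : Prop :=
  B.Countable ∧ ∀ a b, f a = f b →
    ∃ a' b', e a' = B.indicator (e a) ∧ e b' = B.indicator (e b) ∧ f a' = f b'

variable {e : K → I → ℝ} {f : K → L}

theorem tendsto_indicator_iUnion (s : ℕ → Set I) (hs : Monotone s) (x : I → ℝ) :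
    Tendsto (fun n => (s n).indicator x) atTop (𝓝 ((⋃ n, s n).indicator x)) := by
  rw [tendsto_pi_nhds]
  intro i
  exact (hs.tendsto_indicator s x i).mono_right (pure_le_nhds _)

theorem admissible_iUnion [T2Space L] (he : Continuous e) (hinj : Function.Injective e)
    (hf : Continuous f) (s : ℕ → Set I) (hs : Monotone s) (hA : ∀ n, Admissible e f (s n)) :
    Admissible e f (⋃ n, s n) := by
  have hemb : IsClosedEmbedding e := he.isClosedEmbedding hinj
  refine ⟨countable_iUnion fun n => (hA n).1, fun a b hab => ?_⟩
  choose a' b' ha' hb' hab' using fun n => (hA n).2 a b hab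
  have key : ∀ (c : K) (c' : ℕ → K), (∀ n, e (c' n) = (s n).indicator (e c)) →
      ∃ d, e d = (⋃ n, s n).indicator (e c) ∧ Tendsto c' atTop (𝓝 d) := by
    intro c c' h
    have ht : Tendsto (fun n => e (c' n)) atTop (𝓝 ((⋃ n, s n).indicator (e c))) := by
      simp only [h]
      exact tendsto_indicator_iUnion s hs _
    have hm : (⋃ n, s n).indicator (e c) ∈ range e :=
      hemb.isClosed_range.mem_of_tendsto ht (Eventually.of_forall fun n => mem_range_self _)
    obtain ⟨d, hd⟩ := hm
    refine ⟨d, hd, ?_⟩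
    rw [hemb.isEmbedding.tendsto_nhds_iff, hd]
    exact ht
  obtain ⟨c, hc, hct⟩ := key a a' ha'
  obtain ⟨d, hd, hdt⟩ := key b b' hb'
  refine ⟨c, d, hc, hd, ?_⟩
  have h1 := (hf.tendsto c).comp hct
  have h2 := (hf.tendsto d).comp hdt
  refine tendsto_nhds_unique h1 ?_
  convert h2 using 1
  funext n
  exact hab' n

/-- Every countable set of coordinates is contained in an admissible one: close off under the
supports of a countable subset of the fibre relation that is dense as seen by the coordinates
collected so far. -/
theorem exists_admissible_superset [T2Space L] (he : Continuous e)
    (hsupp : ∀ x, {i | e x i ≠ 0}.Countable)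
    (hf : Continuous f) (B₀ : Set I) (hB₀ : B₀.Countable) :
    ∃ B, B₀ ⊆ B ∧ Admissible e f B := by
  let R : Set (K × K) := {p | f p.1 = f p.2}
  have hRc : IsClosed R := isClosed_eq (by fun_prop) (by fun_prop)
  let g : ∀ B : Set I, K × K → (B → ℝ) × (B → ℝ) :=
    fun B p => (fun i => e p.1 i, fun i => e p.2 i)
  have hgc : ∀ B, Continuous (g B) := fun B => by fun_prop
  have hN : ∀ B : Set I, ∃ N : Set (K × K), N ⊆ R ∧ N.Countable ∧
      (B.Countable → g B '' R ⊆ closure (g B '' N)) := by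
    intro B
    by_cases hB : B.Countable
    · have := hB.to_subtype
      obtain ⟨N, h1, h2, h3⟩ := exists_countable_image_dense (g B) R
      exact ⟨N, h1, h2, fun _ => h3⟩
    · exact ⟨∅, empty_subset _, countable_empty, fun h => absurd h hB⟩
  choose N hNR hNc hNd using hN
  let next : Set I → Set I := fun B =>
    B ∪ ⋃ p ∈ N B, ({i | e p.1 i ≠ 0} ∪ {i | e p.2 i ≠ 0})
  let s : ℕ → Set I := fun n => next^[n] B₀
  have hs_succ : ∀ n, s (n + 1) = next (s n) := fun n => Function.iterate_succ_apply' _ _ _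
  have hsc : ∀ n, (s n).Countable := by
    intro n
    induction n with
    | zero => exact hB₀
    | succ n ih =>
      rw [hs_succ]
      exact ih.union ((hNc _).biUnion fun p _ => (hsupp _).union (hsupp _))
  have hmono : Monotone s := by
    refine monotone_nat_of_le_succ fun n => ?_
    rw [hs_succ]
    exact subset_union_left
  refine ⟨⋃ n, s n, subset_iUnion s 0, countable_iUnion hsc, fun a b hab => ?_⟩
  let C : Set (K × K) := closure (⋃ n, N (s n))
  have hCR : C ⊆ R := closure_minimal (iUnion_subset fun n => hNR _) hRc
  -- the points of `C` are supported in `⋃ n, s n`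
  have hCs : ∀ p ∈ C, ∀ i, i ∉ ⋃ n, s n → e p.1 i = 0 ∧ e p.2 i = 0 := by
    intro p hp i hi
    have : C ⊆ {p : K × K | e p.1 i = 0 ∧ e p.2 i = 0} := by
      refine closure_minimal ?_ ?_
      · refine iUnion_subset fun n p hp => ?_
        by_contra hcon
        apply hi
        refine mem_iUnion.2 ⟨n + 1, ?_⟩
        rw [hs_succ]
        refine Or.inr (mem_iUnion₂.2 ⟨p, hp, ?_⟩)
        by_contra h
        apply hcon
        simpa [not_or] using h
      · exact (isClosed_eq (by fun_prop) (by fun_prop)).inter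
          (isClosed_eq (by fun_prop) (by fun_prop))
    exact this hp
  have hne : (⋂ n, C ∩ {p | g (s n) p = g (s n) (a, b)}).Nonempty := by
    refine IsCompact.nonempty_iInter_of_sequence_nonempty_isCompact_isClosed _ ?_ ?_ ?_ ?_
    · rintro n p ⟨hpC, hp⟩
      refine ⟨hpC, ?_⟩
      have hle : s n ⊆ s (n + 1) := hmono n.le_succ
      simp only [g, Prod.mk.injEq, mem_ofPred_eq, funext_iff] at hp ⊢
      exact ⟨fun i => hp.1 ⟨i, hle i.2⟩, fun i => hp.2 ⟨i, hle i.2⟩⟩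
    · intro n
      have h1 : g (s n) (a, b) ∈ closure (g (s n) '' N (s n)) :=
        hNd _ (hsc n) (mem_image_of_mem _ hab)
      have h2 : closure (g (s n) '' N (s n)) ⊆ g (s n) '' C := by
        refine closure_minimal (image_mono ((subset_iUnion (fun n => N (s n)) n).trans
          subset_closure)) ?_
        exact (isClosed_closure.isCompact.image (hgc _)).isClosed
      obtain ⟨p, hp, hpe⟩ := h2 h1
      exact ⟨p, hp, hpe⟩
    · exact (isClosed_closure.inter (isClosed_eq (hgc _) continuous_const)).isCompact
    · exact fun n => isClosed_closure.inter (isClosed_eq (hgc _) continuous_const)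
  obtain ⟨p, hp⟩ := hne
  rw [mem_iInter] at hp
  have hpC : p ∈ C := (hp 0).1
  refine ⟨p.1, p.2, ?_, ?_, hCR hpC⟩
  · funext i
    by_cases hi : i ∈ ⋃ n, s n
    · rw [indicator_of_mem hi]
      obtain ⟨n, hn⟩ := mem_iUnion.1 hi
      have := congrFun (congrArg Prod.fst (hp n).2) ⟨i, hn⟩
      exact this
    · rw [indicator_of_notMem hi]
      exact (hCs p hpC i hi).1
  · funext i
    by_cases hi : i ∈ ⋃ n, s n
    · rw [indicator_of_mem hi]
      obtain ⟨n, hn⟩ := mem_iUnion.1 hi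
      have := congrFun (congrArg Prod.snd (hp n).2) ⟨i, hn⟩
      exact this
    · rw [indicator_of_notMem hi]
      exact (hCs p hpC i hi).2

/-- An admissible set of coordinates induces a continuous self-map of the image `L`. -/
theorem Admissible.exists_map [T2Space L] (he : Continuous e) (hinj : Function.Injective e)
    (hf : Continuous f) (hfs : Function.Surjective f) {B : Set I} (hB : Admissible e f B) :
    ∃ ρ : C(L, L), MetrizableSpace (range ρ) ∧
      ∀ a a', e a' = B.indicator (e a) → ρ (f a) = f a' := by
  have hemb : IsClosedEmbedding e := he.isClosedEmbedding hinj
  have hex : ∀ a, ∃ a', e a' = B.indicator (e a) := by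
    intro a
    obtain ⟨a', -, h, -⟩ := hB.2 a a rfl
    exact ⟨a', h⟩
  choose p hp using hex
  have hpc : Continuous p := by
    rw [hemb.isEmbedding.continuous_iff]
    refine continuous_pi fun i => ?_
    have : (fun a => (e ∘ p) a i) = fun a => B.indicator (e a) i := by
      funext a
      simp [hp]
    rw [this]
    by_cases hi : i ∈ B
    · simp only [indicator_of_mem hi]
      fun_prop
    · simp only [indicator_of_notMem hi]
      fun_prop
  have hresp : ∀ a b, f a = f b → f (p a) = f (p b) := by
    intro a b hab
    obtain ⟨a', b', ha, hb, h⟩ := hB.2 a b hab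
    rw [hinj ((hp a).trans ha.symm), hinj ((hp b).trans hb.symm), h]
  have hq : IsQuotientMap f := hf.isClosedMap.isQuotientMap hf hfs
  let ρ : L → L := fun l => f (p (hfs l).choose)
  have hρ : ∀ a, ρ (f a) = f (p a) := fun a => hresp _ _ (hfs (f a)).choose_spec
  have hρc : Continuous ρ := by
    rw [hq.continuous_iff]
    have : ρ ∘ f = f ∘ p := funext hρ
    rw [this]
    fun_prop
  refine ⟨⟨ρ, hρc⟩, ?_, ?_⟩
  · have := hB.1.to_subtype
    refine metrizable_of_factor (Z := K) (E := B → ℝ) (fun a => (⟨ρ (f a), f a, rfl⟩ : range ρ))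
      (by fun_prop) ?_ (fun a i => e a i) (by fun_prop) ?_
    · rintro ⟨_, l, rfl⟩
      obtain ⟨a, rfl⟩ := hfs l
      exact ⟨a, rfl⟩
    · intro a b hab
      simp only [Subtype.mk.injEq, hρ]
      congr 1
      apply hinj
      rw [hp, hp]
      funext i
      by_cases hi : i ∈ B
      · simpa only [indicator_of_mem hi] using congrFun hab ⟨i, hi⟩
      · simp only [indicator_of_notMem hi]
  · intro a a' h
    change ρ (f a) = f a'
    rw [hρ, hinj ((hp a).trans h.symm)]

theorem hasRetractionalSkeleton_image [T2Space L] (he : Continuous e)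
    (hinj : Function.Injective e) (hsupp : ∀ x, {i | e x i ≠ 0}.Countable)
    (hf : Continuous f) (hfs : Function.Surjective f) : HasRetractionalSkeleton L := by
  have hemb : IsClosedEmbedding e := he.isClosedEmbedding hinj
  choose ρ hρm hρ using fun B : {B : Set I // Admissible e f B} =>
    B.2.exists_map he hinj hf hfs
  have hex : ∀ (B : {B : Set I // Admissible e f B}) (a : K),
      ∃ a', e a' = B.1.indicator (e a) := by
    intro B a
    obtain ⟨a', -, h, -⟩ := B.2.2 a a rfl
    exact ⟨a', h⟩
  choose p hp using hex
  have hρp : ∀ B a, ρ B (f a) = f (p B a) := fun B a => hρ B a _ (hp B a)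
  obtain ⟨B₁, -, hB₁⟩ := exists_admissible_superset he hsupp hf ∅ countable_empty
  have hcomp : ∀ B C : {B : Set I // Admissible e f B}, B ≤ C → ∀ a,
      p B (p C a) = p B a ∧ p C (p B a) = p B a := by
    intro B C hBC a
    have hBC : B.1 ⊆ C.1 := hBC
    refine ⟨hinj ?_, hinj ?_⟩
    · rw [hp, hp, hp, indicator_indicator, inter_eq_left.2 hBC]
    · rw [hp, hp, indicator_indicator, inter_eq_right.2 hBC]
  refine ⟨{
    Γ := {B : Set I // Admissible e f B}
    ne := ⟨⟨B₁, hB₁⟩⟩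
    directed := ?_
    r := ρ
    isRetraction := ?_
    metrizable := hρm
    tendsto_id := ?_
    comp_eq_of_le := ?_
    sup_seq := ?_ }⟩
  · intro s t
    obtain ⟨B, hB, hBa⟩ := exists_admissible_superset he hsupp hf (s.1 ∪ t.1)
      (s.2.1.union t.2.1)
    exact ⟨⟨B, hBa⟩, subset_union_left.trans hB, subset_union_right.trans hB⟩
  · intro s x
    obtain ⟨a, rfl⟩ := hfs x
    rw [hρp, hρp, (hcomp s s le_rfl a).1]
  · intro x
    obtain ⟨a, rfl⟩ := hfs x
    obtain ⟨B, hB, hBa⟩ := exists_admissible_superset he hsupp hf _ (hsupp a)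
    refine tendsto_nhds_of_eventually_eq ?_
    filter_upwards [eventually_ge_atTop (⟨B, hBa⟩ : {B : Set I // Admissible e f B})] with C hC
    have hC : B ⊆ C.1 := hC
    rw [hρp]
    congr 1
    apply hinj
    rw [hp, indicator_eq_self]
    exact hB.trans hC
  · intro s t hst x
    obtain ⟨a, rfl⟩ := hfs x
    rw [hρp, hρp, hρp, hρp, (hcomp s t hst a).1, (hcomp s t hst a).2]
    exact ⟨rfl, rfl⟩
  · intro s hs
    have hs' : Monotone fun n => (s n).1 := fun m n hmn => hs.monotone hmn
    let t : {B : Set I // Admissible e f B} :=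
      ⟨⋃ n, (s n).1, admissible_iUnion he hinj hf _ hs' fun n => (s n).2⟩
    refine ⟨t, ⟨?_, ?_⟩, ?_⟩
    · rintro _ ⟨n, rfl⟩
      exact subset_iUnion (fun n => (s n).1) n
    · intro C hC
      exact iUnion_subset fun n => hC (mem_range_self n)
    · intro x
      obtain ⟨a, rfl⟩ := hfs x
      simp only [hρp]
      refine (hf.tendsto _).comp ?_
      rw [hemb.isEmbedding.tendsto_nhds_iff, hp]
      have : (e ∘ fun n => p (s n) a) = fun n => (s n).1.indicator (e a) :=
        funext fun n => hp _ _
      rw [this]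
      exact tendsto_indicator_iUnion _ hs' _

end Images

/-! ### Basic properties of retractional skeletons -/

attribute [instance] RetractionalSkeleton.po RetractionalSkeleton.ne

namespace RetractionalSkeleton

section Basic

variable {K : Type u} [TopologicalSpace K] (𝔰 : RetractionalSkeleton K)

theorem fix_of_le {s t : 𝔰.Γ} (h : s ≤ t) {x : K} (hx : 𝔰.r s x = x) : 𝔰.r t x = x := by
  have := (𝔰.comp_eq_of_le s t h x).2
  rwa [hx] at this

theorem eq_of_le {s t : 𝔰.Γ} (h : s ≤ t) {x y : K} (hx : 𝔰.r t x = 𝔰.r t y) :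
    𝔰.r s x = 𝔰.r s y := by
  rw [← (𝔰.comp_eq_of_le s t h x).1, hx, (𝔰.comp_eq_of_le s t h y).1]

theorem mem_inducedSet {x : K} : x ∈ 𝔰.inducedSet ↔ ∃ s, 𝔰.r s x = x := by
  simp only [inducedSet, mem_iUnion, mem_range]
  constructor
  · rintro ⟨s, y, rfl⟩
    exact ⟨s, 𝔰.isRetraction s y⟩
  · rintro ⟨s, h⟩
    exact ⟨s, x, h⟩

theorem isClosed_fix [T2Space K] (s : 𝔰.Γ) : IsClosed {x | 𝔰.r s x = x} :=
  isClosed_eq (by fun_prop) (by fun_prop)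

/-- Increasing sequences have suprema, and the retraction at the supremum is determined by the
retractions along the sequence. -/
theorem exists_isLUB_of_monotone [T2Space K] (f : ℕ → 𝔰.Γ) (hf : Monotone f) :
    ∃ t, IsLUB (range f) t ∧ ∀ x y, (∀ n, 𝔰.r (f n) x = 𝔰.r (f n) y) → 𝔰.r t x = 𝔰.r t y := by
  by_cases h : ∃ N, ∀ n, N ≤ n → f n = f N
  · obtain ⟨N, hN⟩ := h
    refine ⟨f N, ⟨?_, fun b hb => hb (mem_range_self N)⟩, fun x y hxy => hxy N⟩
    rintro _ ⟨n, rfl⟩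
    rcases le_total n N with h | h
    · exact hf h
    · exact (hN n h).le
  · push Not at h
    choose g hg hgne using h
    have hg' : ∀ N, f N < f (g N) := fun N => lt_of_le_of_ne (hf (hg N)) (hgne N).symm
    let φ : ℕ → ℕ := fun n => g^[n] 0
    have hφs : ∀ n, φ (n + 1) = g (φ n) := fun n => Function.iterate_succ_apply' _ _ _
    have hsm : StrictMono (fun n => f (φ n)) := strictMono_nat_of_lt_succ fun n => by
      rw [hφs]
      exact hg' _
    have hφm : StrictMono φ := strictMono_nat_of_lt_succ fun n => by
      rw [hφs]
      refine lt_of_le_of_ne (hg _) fun h => ?_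
      have := hgne (φ n)
      rw [← h] at this
      exact this rfl
    obtain ⟨t, ht, hlim⟩ := 𝔰.sup_seq _ hsm
    refine ⟨t, ⟨?_, fun b hb => ht.2 ?_⟩, fun x y hxy => ?_⟩
    · rintro _ ⟨n, rfl⟩
      exact (hf (hφm.id_le n)).trans (ht.1 (mem_range_self n))
    · rintro _ ⟨n, rfl⟩
      exact hb (mem_range_self _)
    · refine tendsto_nhds_unique (hlim x) ?_
      simp only [hxy]
      exact hlim y

theorem exists_isLUB_of_directed [T2Space K] {ι : Type*} [Countable ι] [Nonempty ι]
    (s : ι → 𝔰.Γ) (hs : Directed (· ≤ ·) s) :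
    ∃ t, IsLUB (range s) t ∧ ∀ x y, (∀ i, 𝔰.r (s i) x = 𝔰.r (s i) y) → 𝔰.r t x = 𝔰.r t y := by
  have := Encodable.ofCountable ι
  have : Inhabited ι := Classical.inhabited_of_nonempty ‹_›
  obtain ⟨t, ht, hsep⟩ := 𝔰.exists_isLUB_of_monotone _ hs.sequence_mono
  refine ⟨t, ⟨?_, fun b hb => ht.2 ?_⟩, fun x y hxy => hsep x y fun n => hxy _⟩
  · rintro _ ⟨i, rfl⟩
    exact (hs.le_sequence i).trans (ht.1 (mem_range_self _))
  · rintro _ ⟨n, rfl⟩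
    exact hb (mem_range_self _)

theorem exists_upperBound [T2Space K] {ι : Type*} [Countable ι] (s : ι → 𝔰.Γ) :
    ∃ t, ∀ i, s i ≤ t := by
  rcases isEmpty_or_nonempty ι with h | h
  · exact ⟨Classical.arbitrary _, fun i => h.elim i⟩
  obtain ⟨f, hf⟩ := exists_surjective_nat ι
  choose w hw1 hw2 using 𝔰.directed
  let g : ℕ → 𝔰.Γ := fun n => Nat.rec (s (f 0)) (fun n a => w a (s (f (n + 1)))) n
  have hg : Monotone g := monotone_nat_of_le_succ fun n => hw1 _ _
  have hgf : ∀ n, s (f n) ≤ g n := by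
    intro n
    cases n with
    | zero => exact le_rfl
    | succ n => exact hw2 _ _
  obtain ⟨t, ht, -⟩ := 𝔰.exists_isLUB_of_monotone g hg
  refine ⟨t, fun i => ?_⟩
  obtain ⟨n, rfl⟩ := hf i
  exact (hgf n).trans (ht.1 (mem_range_self n))

/-- A countable subset of the induced set lies in the range of a single retraction. -/
theorem exists_fix_of_countable [T2Space K] {C : Set K} (hC : C.Countable)
    (hD : C ⊆ 𝔰.inducedSet) : ∃ t, ∀ x ∈ C, 𝔰.r t x = x := by
  have := hC.to_subtype
  choose s hs using fun x : C => 𝔰.mem_inducedSet.1 (hD x.2)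
  obtain ⟨t, ht⟩ := 𝔰.exists_upperBound s
  exact ⟨t, fun x hx => 𝔰.fix_of_le (ht ⟨x, hx⟩) (hs ⟨x, hx⟩)⟩

theorem closure_subset_inducedSet [T2Space K] {C : Set K} (hC : C.Countable)
    (hD : C ⊆ 𝔰.inducedSet) : closure C ⊆ 𝔰.inducedSet := by
  obtain ⟨t, ht⟩ := 𝔰.exists_fix_of_countable hC hD
  intro x hx
  exact 𝔰.mem_inducedSet.2 ⟨t, closure_minimal ht (𝔰.isClosed_fix t) hx⟩

theorem exists_ne_of_ne [T2Space K] {x y : K} (h : x ≠ y) : ∃ s, 𝔰.r s x ≠ 𝔰.r s y := by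
  by_contra hcon
  push Not at hcon
  apply h
  have : IsDirectedOrder 𝔰.Γ := ⟨𝔰.directed⟩
  refine tendsto_nhds_unique (𝔰.tendsto_id x) ?_
  simp only [hcon]
  exact 𝔰.tendsto_id y

end Basic

section Compact

variable {K : Type u} [TopologicalSpace K] (𝔰 : RetractionalSkeleton K) [CompactSpace K]

theorem exists_countable_dense_image (s : 𝔰.Γ) (S : Set K) :
    ∃ N ⊆ S, N.Countable ∧ 𝔰.r s '' S ⊆ closure (𝔰.r s '' N) := by
  have := 𝔰.metrizable s
  have : CompactSpace (range (𝔰.r s)) :=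
    isCompact_iff_compactSpace.1 (isCompact_range (𝔰.r s).continuous)
  let := metrizableSpaceMetric (range (𝔰.r s))
  have : SecondCountableTopology (range (𝔰.r s)) := UniformSpace.secondCountable_of_separable _
  obtain ⟨N, hNS, hNc, hN⟩ := exists_countable_image_dense (rangeFactorization (𝔰.r s)) S
  refine ⟨N, hNS, hNc, ?_⟩
  rintro _ ⟨x, hx, rfl⟩
  have := hN (mem_image_of_mem _ hx)
  rw [closure_subtype, ← image_comp] at this
  exact this

variable [T2Space K]

/-- The induced set has countable tightness. -/
theorem exists_countable_mem_closure {S : Set K} (hS : S ⊆ 𝔰.inducedSet) {y : K}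
    (hy : y ∈ 𝔰.inducedSet) (hyS : y ∈ closure S) :
    ∃ C ⊆ S, C.Countable ∧ y ∈ closure C := by
  choose N hNS hNc hN using fun s => 𝔰.exists_countable_dense_image s S
  have hnext : ∀ s, ∃ t, s ≤ t ∧ ∀ x ∈ N s, 𝔰.r t x = x := by
    intro s
    obtain ⟨t, ht⟩ := 𝔰.exists_fix_of_countable (hNc s) ((hNS s).trans hS)
    obtain ⟨w, h1, h2⟩ := 𝔰.directed s t
    exact ⟨w, h1, fun x hx => 𝔰.fix_of_le h2 (ht x hx)⟩
  choose next hle hfix using hnext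
  obtain ⟨s₀, hs₀⟩ := 𝔰.mem_inducedSet.1 hy
  let s : ℕ → 𝔰.Γ := fun n => next^[n] s₀
  have hss : ∀ n, s (n + 1) = next (s n) := fun n => Function.iterate_succ_apply' _ _ _
  have hmono : Monotone s := monotone_nat_of_le_succ fun n => by
    rw [hss]
    exact hle _
  obtain ⟨t, ht, hsep⟩ := 𝔰.exists_isLUB_of_monotone s hmono
  let C : Set K := ⋃ n, N (s n)
  refine ⟨C, iUnion_subset fun n => hNS _, countable_iUnion fun n => hNc _, ?_⟩
  have hCt : closure C ⊆ {x | 𝔰.r t x = x} := by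
    refine closure_minimal (iUnion_subset fun n x hx => ?_) (𝔰.isClosed_fix t)
    refine 𝔰.fix_of_le (ht.1 (mem_range_self (n + 1))) ?_
    rw [hss]
    exact hfix _ x hx
  have hyt : 𝔰.r t y = y := 𝔰.fix_of_le (ht.1 (mem_range_self 0)) hs₀
  have hclosed : ∀ n, IsClosed (closure C ∩ {c | 𝔰.r (s n) c = 𝔰.r (s n) y}) := fun n =>
    isClosed_closure.inter (isClosed_eq (by fun_prop) (by fun_prop))
  have hne : (⋂ n, closure C ∩ {c | 𝔰.r (s n) c = 𝔰.r (s n) y}).Nonempty := by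
    refine IsCompact.nonempty_iInter_of_sequence_nonempty_isCompact_isClosed _ ?_ ?_
      (hclosed 0).isCompact hclosed
    · rintro n c ⟨hc, hcy⟩
      exact ⟨hc, 𝔰.eq_of_le (hmono n.le_succ) hcy⟩
    · intro n
      have h1 : 𝔰.r (s n) y ∈ closure (𝔰.r (s n) '' S) :=
        image_closure_subset_closure_image (𝔰.r (s n)).continuous (mem_image_of_mem _ hyS)
      have h2 : closure (𝔰.r (s n) '' S) ⊆ closure (𝔰.r (s n) '' N (s n)) :=
        closure_minimal (hN _) isClosed_closure
      have h3 : closure (𝔰.r (s n) '' N (s n)) ⊆ 𝔰.r (s n) '' closure C := by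
        refine closure_minimal (image_mono ((subset_iUnion (fun n => N (s n)) n).trans
          subset_closure)) ?_
        exact (isClosed_closure.isCompact.image (𝔰.r (s n)).continuous).isClosed
      obtain ⟨c, hc, hcy⟩ := h3 (h2 h1)
      exact ⟨c, hc, hcy⟩
  obtain ⟨c, hc⟩ := hne
  rw [mem_iInter] at hc
  have : c = y := by
    rw [← hCt (hc 0).1, ← hyt]
    exact hsep _ _ fun n => (hc n).2
  rw [← this]
  exact (hc 0).1

/-- Every real continuous function factors through all sufficiently large retractions. The functions
with this property form a point-separating subalgebra which is closed under uniform limits because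
countable subsets of the index set are bounded. -/
theorem exists_comp_eq (φ : C(K, ℝ)) : ∃ s, ∀ t, s ≤ t → ∀ x, φ (𝔰.r t x) = φ x := by
  have up : ∀ {ψ : C(K, ℝ)} {s : 𝔰.Γ}, (∀ x, ψ (𝔰.r s x) = ψ x) →
      ∀ t, s ≤ t → ∀ x, ψ (𝔰.r t x) = ψ x := by
    intro ψ s h t hst x
    rw [← h (𝔰.r t x), (𝔰.comp_eq_of_le s t hst x).1, h]
  suffices h : ∃ s, ∀ x, φ (𝔰.r s x) = φ x by
    obtain ⟨s, hs⟩ := h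
    exact ⟨s, up hs⟩
  let A : Subalgebra ℝ C(K, ℝ) :=
    { carrier := {ψ | ∃ s, ∀ x, ψ (𝔰.r s x) = ψ x}
      mul_mem' := by
        rintro a b ⟨s, hs⟩ ⟨t, ht⟩
        obtain ⟨w, h1, h2⟩ := 𝔰.directed s t
        exact ⟨w, fun x => by simp [up hs w h1, up ht w h2]⟩
      add_mem' := by
        rintro a b ⟨s, hs⟩ ⟨t, ht⟩
        obtain ⟨w, h1, h2⟩ := 𝔰.directed s t
        exact ⟨w, fun x => by simp [up hs w h1, up ht w h2]⟩
      algebraMap_mem' := fun c => ⟨Classical.arbitrary _, fun x => by simp⟩ }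
  have hsep : A.SeparatesPoints := by
    intro x y hxy
    obtain ⟨s, hs⟩ := 𝔰.exists_ne_of_ne hxy
    obtain ⟨ψ, h0, h1, -⟩ := exists_continuous_zero_one_of_isClosed
      (isClosed_singleton (x := 𝔰.r s x)) (isClosed_singleton (x := 𝔰.r s y)) (by simpa using hs)
    refine ⟨ψ.comp (𝔰.r s), ⟨ψ.comp (𝔰.r s), ⟨s, fun z => ?_⟩, rfl⟩, ?_⟩
    · simp [𝔰.isRetraction]
    · have h0 := h0 (mem_singleton _)
      have h1 := h1 (mem_singleton _)
      simp_all
  have htop := ContinuousMap.subalgebra_topologicalClosure_eq_top_of_separatesPoints A hsep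
  have hφ : φ ∈ closure (A : Set C(K, ℝ)) := by
    rw [← Subalgebra.topologicalClosure_coe, htop]
    trivial
  obtain ⟨a, ha, hlim⟩ := mem_closure_iff_seq_limit.1 hφ
  choose s hs using ha
  obtain ⟨t, ht⟩ := 𝔰.exists_upperBound s
  refine ⟨t, fun x => ?_⟩
  have hev : ∀ z, Tendsto (fun n => a n z) atTop (𝓝 (φ z)) := fun z =>
    ((continuous_eval_const z).tendsto φ).comp hlim
  refine tendsto_nhds_unique (hev (𝔰.r t x)) ?_
  have : (fun n => a n (𝔰.r t x)) = fun n => a n x := funext fun n => up (hs n) t (ht n) x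
  rw [this]
  exact hev x

end Compact

end RetractionalSkeleton

/-! ### Full retractional skeletons and Corson compacta -/

namespace RetractionalSkeleton

section Definitions

variable {K : Type u} [TopologicalSpace K] (𝔰 : RetractionalSkeleton K)

/-- There is a monotone choice of upper bounds for finite subsets of the index set. -/
theorem exists_monotone_upperBound [T2Space K] :
    ∃ w : Finset 𝔰.Γ → 𝔰.Γ, Monotone w ∧ ∀ F, ∀ s ∈ F, s ≤ w F := by
  classical
  choose b hb using fun (F : Finset 𝔰.Γ) (ih : ∀ t, t ⊂ F → 𝔰.Γ) =>
    𝔰.exists_upperBound (fun i : {s // s ∈ F} ⊕ {t // t ∈ F.ssubsets} =>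
      Sum.elim (fun s => s.1) (fun t => ih t.1 (Finset.mem_ssubsets.1 t.2)) i)
  let w : Finset 𝔰.Γ → 𝔰.Γ := fun F => Finset.strongInduction b F
  have hw : ∀ F, w F = b F fun t _ => w t := fun F => Finset.strongInduction_eq b F
  refine ⟨w, fun F G hFG => ?_, fun F s hs => ?_⟩
  · rcases hFG.eq_or_ssubset with rfl | h
    · exact le_rfl
    · rw [hw G]
      exact hb G (fun t _ => w t) (Sum.inr ⟨F, Finset.mem_ssubsets.2 h⟩)
  · rw [hw F]
    exact hb F (fun t _ => w t) (Sum.inl ⟨s, hs⟩)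

/-- `x` and `y` are identified by all retractions attached by `w` to finite subsets of `Y`. -/
def Eqv (w : Finset 𝔰.Γ → 𝔰.Γ) (Y : Set 𝔰.Γ) (x y : K) : Prop :=
  ∀ F : Finset 𝔰.Γ, (F : Set 𝔰.Γ) ⊆ Y → 𝔰.r (w F) x = 𝔰.r (w F) y

/-- The closure of the union of the ranges of the retractions attached by `w` to finite subsets
of `Y`. -/
def Rng (w : Finset 𝔰.Γ → 𝔰.Γ) (Y : Set 𝔰.Γ) : Set K :=
  closure {y | ∃ F : Finset 𝔰.Γ, (F : Set 𝔰.Γ) ⊆ Y ∧ 𝔰.r (w F) y = y}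

variable {𝔰} {w : Finset 𝔰.Γ → 𝔰.Γ} {Y Z : Set 𝔰.Γ} {x y z : K}

theorem Eqv.mono (h : 𝔰.Eqv w Z x y) (hYZ : Y ⊆ Z) : 𝔰.Eqv w Y x y :=
  fun F hF => h F (hF.trans hYZ)

theorem Eqv.symm (h : 𝔰.Eqv w Y x y) : 𝔰.Eqv w Y y x := fun F hF => (h F hF).symm

theorem Eqv.trans (h : 𝔰.Eqv w Y x y) (h' : 𝔰.Eqv w Y y z) : 𝔰.Eqv w Y x z :=
  fun F hF => (h F hF).trans (h' F hF)

variable (𝔰) in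
theorem Rng_mono (w : Finset 𝔰.Γ → 𝔰.Γ) (hYZ : Y ⊆ Z) : 𝔰.Rng w Y ⊆ 𝔰.Rng w Z :=
  closure_mono fun _ ⟨F, hF, h⟩ => ⟨F, hF.trans hYZ, h⟩

end Definitions

/-- The finite subsets of a countable set form a countable type. -/
theorem countable_finset_subset {α : Type*} {Z : Set α} (hZ : Z.Countable) :
    Countable {F : Finset α // (F : Set α) ⊆ Z} := by
  classical
  have := hZ.to_subtype
  refine Function.Surjective.countable (f := fun G : Finset Z =>
    (⟨G.map (Function.Embedding.subtype _), ?_⟩ : {F : Finset α // (F : Set α) ⊆ Z})) ?_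
  · intro a ha
    simp only [Finset.coe_map, mem_image] at ha
    obtain ⟨b, -, rfl⟩ := ha
    exact b.2
  · rintro ⟨F, hF⟩
    exact ⟨F.subtype (· ∈ Z), Subtype.ext (Finset.subtype_map_of_mem fun x hx => hF hx)⟩

section Full

variable {K : Type u} [TopologicalSpace K] [CompactSpace K] [T2Space K]
  {𝔰 : RetractionalSkeleton K} {w : Finset 𝔰.Γ → 𝔰.Γ} {Y Z : Set 𝔰.Γ} {x y z : K}

theorem exists_countable_mem_Rng (hD : ∀ x, ∃ s, 𝔰.r s x = x) (hy : y ∈ 𝔰.Rng w Y) :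
    ∃ Z ⊆ Y, Z.Countable ∧ y ∈ 𝔰.Rng w Z := by
  have hDu : ∀ x, x ∈ 𝔰.inducedSet := fun x => 𝔰.mem_inducedSet.2 (hD x)
  obtain ⟨C, hCS, hCc, hyC⟩ := 𝔰.exists_countable_mem_closure (fun z _ => hDu z) (hDu y) hy
  have := hCc.to_subtype
  choose F hFY hF using fun c : C => hCS c.2
  refine ⟨⋃ c : C, (F c : Set 𝔰.Γ), iUnion_subset hFY,
    countable_iUnion fun c => (F c).countable_toSet, ?_⟩
  refine closure_mono (fun c hc => ?_) hyC
  exact ⟨F ⟨c, hc⟩, subset_iUnion (fun c : C => (F c : Set 𝔰.Γ)) ⟨c, hc⟩, hF ⟨c, hc⟩⟩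

/-- Points of `Rng w Y` are separated by the retractions attached to finite subsets of `Y`: by
countable tightness this reduces to countable `Y`, where the supremum of these retractions exists
and fixes both points. -/
theorem eq_of_mem_Rng (hw : Monotone w) (hD : ∀ x, ∃ s, 𝔰.r s x = x)
    (hx : x ∈ 𝔰.Rng w Y) (hy : y ∈ 𝔰.Rng w Y) (h : 𝔰.Eqv w Y x y) : x = y := by
  classical
  obtain ⟨Z₁, hZ₁, hc₁, hx⟩ := exists_countable_mem_Rng hD hx
  obtain ⟨Z₂, hZ₂, hc₂, hy⟩ := exists_countable_mem_Rng hD hy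
  have hx := 𝔰.Rng_mono w (subset_union_left (t := Z₂)) hx
  have hy := 𝔰.Rng_mono w (subset_union_right (s := Z₁)) hy
  have := countable_finset_subset (hc₁.union hc₂)
  have : Nonempty {F : Finset 𝔰.Γ // (F : Set 𝔰.Γ) ⊆ Z₁ ∪ Z₂} := ⟨⟨∅, by simp⟩⟩
  obtain ⟨t, ht, hsep⟩ := 𝔰.exists_isLUB_of_directed
    (fun F : {F : Finset 𝔰.Γ // (F : Set 𝔰.Γ) ⊆ Z₁ ∪ Z₂} => w F.1) (by
      intro F G
      refine ⟨⟨F.1 ∪ G.1, ?_⟩, hw Finset.subset_union_left, hw Finset.subset_union_right⟩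
      rw [Finset.coe_union]
      exact union_subset F.2 G.2)
  have hfix : 𝔰.Rng w (Z₁ ∪ Z₂) ⊆ {x | 𝔰.r t x = x} := by
    refine closure_minimal ?_ (𝔰.isClosed_fix t)
    rintro z ⟨F, hF, hz⟩
    exact 𝔰.fix_of_le (ht.1 ⟨⟨F, hF⟩, rfl⟩) hz
  rw [← hfix hx, ← hfix hy]
  exact hsep x y fun F => h F.1 (F.2.trans (union_subset hZ₁ hZ₂))

theorem exists_mem_Rng_eqv (hw : Monotone w) (Y : Set 𝔰.Γ) (x : K) :
    ∃ y ∈ 𝔰.Rng w Y, 𝔰.Eqv w Y y x := by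
  classical
  have : Nonempty {F : Finset 𝔰.Γ // (F : Set 𝔰.Γ) ⊆ Y} := ⟨⟨∅, by simp⟩⟩
  have hcl : ∀ F : {F : Finset 𝔰.Γ // (F : Set 𝔰.Γ) ⊆ Y},
      IsClosed (𝔰.Rng w Y ∩ {y | 𝔰.r (w F.1) y = 𝔰.r (w F.1) x}) := fun F =>
    isClosed_closure.inter (isClosed_eq (by fun_prop) (by fun_prop))
  have hne := IsCompact.nonempty_iInter_of_directed_nonempty_isCompact_isClosed
    (fun F : {F : Finset 𝔰.Γ // (F : Set 𝔰.Γ) ⊆ Y} =>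
      𝔰.Rng w Y ∩ {y | 𝔰.r (w F.1) y = 𝔰.r (w F.1) x}) ?_ ?_ (fun F => (hcl F).isCompact) hcl
  · obtain ⟨y, hy⟩ := hne
    rw [mem_iInter] at hy
    exact ⟨y, (hy (Classical.arbitrary _)).1, fun F hF => (hy ⟨F, hF⟩).2⟩
  · intro F G
    refine ⟨⟨F.1 ∪ G.1, ?_⟩, ?_, ?_⟩
    · rw [Finset.coe_union]
      exact union_subset F.2 G.2
    · exact fun y hy => ⟨hy.1, 𝔰.eq_of_le (hw Finset.subset_union_left) hy.2⟩
    · exact fun y hy => ⟨hy.1, 𝔰.eq_of_le (hw Finset.subset_union_right) hy.2⟩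
  · intro F
    refine ⟨𝔰.r (w F.1) x, subset_closure ⟨F.1, F.2, 𝔰.isRetraction _ _⟩, 𝔰.isRetraction _ _⟩

/-- The family `R Y` of continuous retractions onto the sets `Rng w Y`, for arbitrary subsets `Y` of
the index set. -/
theorem exists_bigRetraction (hw : Monotone w) (hD : ∀ x, ∃ s, 𝔰.r s x = x) :
    ∃ R : Set 𝔰.Γ → K → K, ∀ Y, Continuous (R Y) ∧ (∀ x, 𝔰.Eqv w Y (R Y x) x) ∧
      ∀ x y, y ∈ 𝔰.Rng w Y → 𝔰.Eqv w Y y x → R Y x = y := by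
  choose R hR hRe using fun Y x => exists_mem_Rng_eqv (𝔰 := 𝔰) hw Y x
  have huniq : ∀ Y x y, y ∈ 𝔰.Rng w Y → 𝔰.Eqv w Y y x → R Y x = y := fun Y x y hy h =>
    eq_of_mem_Rng hw hD (hR Y x) hy ((hRe Y x).trans h.symm)
  refine ⟨R, fun Y => ⟨?_, hRe Y, huniq Y⟩⟩
  -- the graph of `R Y` is closed and the target is compact
  rw [continuous_iff_isClosed]
  intro T hT
  have hgr : IsClosed {p : K × K | p.2 ∈ 𝔰.Rng w Y ∧ 𝔰.Eqv w Y p.2 p.1} := by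
    suffices hEqv : IsClosed {p : K × K | 𝔰.Eqv w Y p.2 p.1} from
      (isClosed_closure.preimage continuous_snd).inter hEqv
    simp only [Eqv, ofPred_forall]
    refine isClosed_iInter fun F => isClosed_iInter fun hF => ?_
    exact isClosed_eq (by fun_prop) (by fun_prop)
  convert isClosedMap_fst_of_compactSpace _ (hgr.inter (hT.preimage continuous_snd)) using 1
  ext x
  constructor
  · intro hx
    exact ⟨(x, R Y x), ⟨⟨hR Y x, hRe Y x⟩, hx⟩, rfl⟩
  · rintro ⟨⟨x', y⟩, ⟨⟨h1, h2⟩, h3⟩, rfl⟩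
    change R Y x' ∈ T
    rw [huniq Y x' y h1 h2]
    exact h3

/-- The relation `Eqv w Y` is the kernel of a continuous map of `K` into some `Σ(I)`. -/
def SigmaRep (𝔰 : RetractionalSkeleton K) (w : Finset 𝔰.Γ → 𝔰.Γ) (Y : Set 𝔰.Γ) : Prop :=
  ∃ (I : Type u) (F : K → I → ℝ), Continuous F ∧ (∀ x, {i | F x i ≠ 0}.Countable) ∧
    ∀ x y, F x = F y ↔ 𝔰.Eqv w Y x y

theorem sigmaRep_of_countable (hY : Y.Countable) : SigmaRep 𝔰 w Y := by
  have hcoord : ∀ s : 𝔰.Γ, ∃ g : ℕ → K → ℝ, (∀ n, Continuous (g n)) ∧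
      ∀ x y, (∀ n, g n x = g n y) ↔ 𝔰.r s x = 𝔰.r s y := by
    intro s
    have := 𝔰.metrizable s
    have : CompactSpace (range (𝔰.r s)) :=
      isCompact_iff_compactSpace.1 (isCompact_range (𝔰.r s).continuous)
    let := metrizableSpaceMetric (range (𝔰.r s))
    have : SecondCountableTopology (range (𝔰.r s)) := UniformSpace.secondCountable_of_separable _
    let q : K → range (𝔰.r s) := rangeFactorization (𝔰.r s)
    have hqe : ∀ x y, q x = q y ↔ 𝔰.r s x = 𝔰.r s y := fun x y => Subtype.ext_iff
    refine ⟨fun n x => denseSeq C(range (𝔰.r s), ℝ) n (q x), fun n => by fun_prop,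
      fun x y => ⟨fun h => ?_, fun h n => ?_⟩⟩
    · by_contra hne
      obtain ⟨n, hn⟩ := exists_denseSeq_ne fun hq => hne ((hqe x y).1 hq)
      exact hn (h n)
    · simp only [(hqe x y).2 h]
  choose g hgc hg using hcoord
  have := countable_finset_subset hY
  refine ⟨{F : Finset 𝔰.Γ // (F : Set 𝔰.Γ) ⊆ Y} × ℕ, fun x p => g (w p.1.1) p.2 x,
    continuous_pi fun p => hgc _ _, fun x => to_countable _, fun x y => ?_⟩
  constructor
  · intro h F hF
    exact (hg _ x y).1 fun n => congrFun h (⟨F, hF⟩, n)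
  · intro h
    funext p
    exact (hg _ x y).2 (h p.1.1 p.1.2) p.2

theorem finset_subset_image_Iic {α W : Type*} [LinearOrder W] (e : W → α) (S : Set W)
    (F : Finset α) (hF : (F : Set α) ⊆ e '' S) (hne : F.Nonempty) :
    ∃ β ∈ S, (F : Set α) ⊆ e '' Iic β := by
  classical
  obtain ⟨G, hG, rfl⟩ := Finset.subset_set_image_iff.1 hF
  have hGne : G.Nonempty := Finset.image_nonempty.1 hne
  refine ⟨G.max' hGne, hG (G.max'_mem hGne), ?_⟩
  rw [Finset.coe_image]
  exact image_mono fun a ha => G.le_max' a ha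

/-- The retractions along a well-ordered exhaustion of the index set jump at a given point only
countably often: the value at the end of an initial segment is already captured by a countable part
of that segment, so there are no jumps above that part. -/
theorem countable_jumps {W : Type*} [LinearOrder W] [WellFoundedLT W]
    (hD : ∀ x, ∃ s, 𝔰.r s x = x) (hw : Monotone w)
    (R : Set 𝔰.Γ → K → K)
    (hR : ∀ Y, ∀ x y, y ∈ 𝔰.Rng w Y → 𝔰.Eqv w Y y x → R Y x = y)
    (e : W → 𝔰.Γ) (x : K) :
    {α : W | R (e '' Iic α) x ≠ R (e '' Iio α) x}.Countable := by
  set J : Set W := {α : W | R (e '' Iic α) x ≠ R (e '' Iio α) x} with hJ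
  have step : ∀ S : Set W, IsLowerSet S → (∀ γ ∈ S, (J ∩ Iic γ).Countable) →
      (J ∩ S).Countable := by
    intro S hS hγ
    obtain ⟨y, hy, hye⟩ := exists_mem_Rng_eqv (𝔰 := 𝔰) hw (e '' S) x
    obtain ⟨Z, hZS, hZc, hyZ⟩ := exists_countable_mem_Rng hD hy
    have := hZc.to_subtype
    choose c hcS hce using fun z : Z => hZS z.2
    refine (countable_iUnion fun z : Z => hγ (c z) (hcS z)).mono ?_
    rintro α ⟨hαJ, hαS⟩
    by_contra hcon
    simp only [mem_iUnion, not_exists, mem_inter_iff, not_and, mem_Iic, not_le] at hcon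
    have hZα : Z ⊆ e '' Iio α := fun z hz => ⟨c ⟨z, hz⟩, hcon ⟨z, hz⟩ hαJ, hce ⟨z, hz⟩⟩
    have hsub : e '' Iio α ⊆ e '' Iic α := image_mono Iio_subset_Iic_self
    have hsub' : e '' Iic α ⊆ e '' S := image_mono fun β hβ => hS hβ hαS
    apply hαJ
    rw [hR _ x y (𝔰.Rng_mono w (hZα.trans hsub) hyZ) (hye.mono hsub'),
      hR _ x y (𝔰.Rng_mono w hZα hyZ) (hye.mono (hsub.trans hsub'))]
  have hIic : ∀ α : W, (J ∩ Iic α).Countable := by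
    intro α
    induction α using WellFoundedLT.induction with
    | ind α ih =>
      have h := step (Iio α) (isLowerSet_Iio α) ih
      rw [← Iio_insert]
      refine (h.insert α).mono ?_
      rintro β ⟨hβ, rfl | hβ'⟩
      · exact mem_insert _ _
      · exact mem_insert_of_mem _ ⟨hβ, hβ'⟩
  have := step univ isLowerSet_univ fun γ _ => hIic γ
  rwa [inter_univ] at this

/-- Transfinite induction on the cardinality of `Y`, gluing the maps for the initial segments of a
well-ordering of `Y` of minimal type. -/
theorem sigmaRep (hD : ∀ x, ∃ s, 𝔰.r s x = x) (hw : Monotone w) (Y : Set 𝔰.Γ) :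
    SigmaRep 𝔰 w Y := by
  obtain ⟨R, hR⟩ := exists_bigRetraction (𝔰 := 𝔰) hw hD
  have main : ∀ κ : Cardinal.{u}, ∀ Y : Set 𝔰.Γ, Cardinal.mk Y = κ → SigmaRep 𝔰 w Y := by
    intro κ
    induction κ using WellFoundedLT.induction with
    | ind κ ih =>
    intro Y hY
    by_cases hYc : Y.Countable
    · exact sigmaRep_of_countable hYc
    have hκ : Cardinal.aleph0 ≤ κ := by
      rw [← hY]
      exact (not_le.1 fun h => hYc (Cardinal.le_aleph0_iff_set_countable.1 h)).le
    obtain ⟨e⟩ : Nonempty (κ.ord.ToType ≃ Y) :=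
      Cardinal.eq.1 ((Cardinal.mk_ord_toType κ).trans hY.symm)
    let W := κ.ord.ToType
    let e' : W → 𝔰.Γ := fun a => (e a : 𝔰.Γ)
    have he'Y : e' '' univ = Y := by
      ext s
      constructor
      · rintro ⟨a, -, rfl⟩
        exact (e a).2
      · intro hs
        exact ⟨e.symm ⟨s, hs⟩, trivial, by simp [e']⟩
    have hcard : ∀ α : W, Cardinal.mk (e' '' Iic α) < κ := by
      intro α
      refine Cardinal.mk_image_le.trans_lt ?_
      rw [← Iio_insert]
      refine (Cardinal.mk_insert_le).trans_lt ?_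
      have hlt : Cardinal.mk (Iio α) < κ := by
        have := Cardinal.mk_Iio_lt α (by simp [W])
        rwa [Cardinal.mk_ord_toType] at this
      exact Cardinal.add_lt_of_lt hκ hlt (Cardinal.one_lt_aleph0.trans_le hκ)
    obtain ⟨I₀, F₀, hF₀c, hF₀s, hF₀⟩ := sigmaRep_of_countable (𝔰 := 𝔰) (w := w)
      (countable_empty)
    choose I F hFc hFs hF using fun α : W => ih _ (hcard α) (e' '' Iic α) rfl
    let G : K → I₀ ⊕ (Σ α : W, I α) → ℝ := fun x i =>
      Sum.elim (F₀ x) (fun p => F p.1 x p.2 - F p.1 (R (e' '' Iio p.1) x) p.2) i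
    have hRF : ∀ (α : W) (x : K), R (e' '' Iic α) x = R (e' '' Iio α) x →
        F α (R (e' '' Iio α) x) = F α x := by
      intro α x h
      rw [← h]
      exact (hF α _ _).2 ((hR _).2.1 x)
    have hReq : ∀ (Y : Set 𝔰.Γ) (x y : K), 𝔰.Eqv w Y x y → R Y x = R Y y := by
      intro Y x y h
      obtain ⟨z, hz, hze⟩ := exists_mem_Rng_eqv (𝔰 := 𝔰) hw Y y
      rw [(hR Y).2.2 x z hz (hze.trans h.symm), (hR Y).2.2 y z hz hze]
    refine ⟨I₀ ⊕ (Σ α : W, I α), G, ?_, ?_, ?_⟩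
    · refine continuous_pi fun i => ?_
      rcases i with i | ⟨α, i⟩
      · exact (continuous_apply i).comp hF₀c
      · have h1 := hFc α
        have h2 := (hR (e' '' Iio α)).1
        simp only [G, Sum.elim_inr]
        fun_prop
    · intro x
      have hJ := countable_jumps hD hw R (fun Y => (hR Y).2.2) e' x
      have h2 : ∀ α : W,
          {i | F α x i - F α (R (e' '' Iio α) x) i ≠ 0}.Countable := by
        intro α
        refine ((hFs α x).union (hFs α (R (e' '' Iio α) x))).mono fun i hi => ?_
        by_contra hcon
        simp only [mem_union, mem_ofPred_eq, not_or, not_not] at hcon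
        exact hi (by rw [hcon.1, hcon.2, sub_zero])
      refine (((hF₀s x).image Sum.inl).union (hJ.biUnion fun α _ =>
        (h2 α).image fun i => Sum.inr (⟨α, i⟩ : Σ α : W, I α))).mono ?_
      rintro (i | ⟨α, i⟩) hi
      · exact Or.inl ⟨i, hi, rfl⟩
      · refine Or.inr (mem_iUnion₂.2 ⟨α, fun h => hi ?_, i, hi, rfl⟩)
        simp only [G, Sum.elim_inr]
        rw [hRF α x h, sub_self]
    · intro x y
      constructor
      · intro h
        have h₀ : 𝔰.Eqv w ∅ x y := (hF₀ x y).1 (funext fun i => congrFun h (Sum.inl i))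
        -- equivalence on initial segments propagates to their union
        have hun : ∀ S : Set W, (∀ α ∈ S, 𝔰.Eqv w (e' '' Iic α) x y) →
            𝔰.Eqv w (e' '' S) x y := by
          intro S hS E hE
          rcases E.eq_empty_or_nonempty with rfl | hne
          · exact h₀ ∅ (by simp)
          · obtain ⟨β, hβ, hEβ⟩ := finset_subset_image_Iic e' S E hE hne
            exact hS β hβ E hEβ
        have hα : ∀ α : W, 𝔰.Eqv w (e' '' Iic α) x y := by
          intro α
          induction α using WellFoundedLT.induction with
          | ind α ih' =>
            have hlt := hReq _ _ _ (hun (Iio α) ih')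
            refine (hF α x y).1 (funext fun i => ?_)
            have := congrFun h (Sum.inr ⟨α, i⟩)
            simp only [G, Sum.elim_inr, hlt] at this
            linarith
        rw [← he'Y]
        exact hun univ fun α _ => hα α
      · intro h
        funext i
        rcases i with i | ⟨α, i⟩
        · exact congrFun ((hF₀ x y).2 (h.mono (empty_subset _))) i
        · have hsub : ∀ S : Set W, e' '' S ⊆ Y := fun S => by
            rw [← he'Y]
            exact image_mono (subset_univ _)
          simp only [G, Sum.elim_inr]
          rw [(hF α x y).2 (h.mono (hsub _)), hReq _ x y (h.mono (hsub _))]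
  exact main _ Y rfl

theorem isCorsonCompact_of_full (hD : ∀ x, ∃ s, 𝔰.r s x = x) : IsCorsonCompact K := by
  obtain ⟨w, hw, hle⟩ := 𝔰.exists_monotone_upperBound
  obtain ⟨I, F, hFc, hFs, hF⟩ := sigmaRep hD hw univ
  have hinj : Function.Injective F := by
    intro x y h
    by_contra hne
    obtain ⟨s, hs⟩ := 𝔰.exists_ne_of_ne hne
    exact hs (𝔰.eq_of_le (hle {s} s (by simp)) ((hF x y).1 h {s} (subset_univ _)))
  refine ⟨I, range F, isCompact_range hFc, ?_, ⟨?_⟩⟩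
  · rintro _ ⟨x, rfl⟩
    exact hFs x
  · exact (hFc.isClosedEmbedding hinj).isEmbedding.toHomeomorph

end Full

end RetractionalSkeleton

/-! ### The chain of points determined by a point outside the induced set -/

section Chain

open scoped Ordinal

open Order

theorem countable_Iio_of_lt_omega_one {ξ : Ordinal.{0}} (h : ξ < ω₁) : (Iio ξ).Countable := by
  rw [← Cardinal.le_aleph0_iff_set_countable, Cardinal.mk_Iio_ordinal]
  rw [Cardinal.lt_omega_iff_card_lt, Cardinal.lt_aleph_one_iff] at h
  exact Cardinal.lift_le_aleph0.2 h

namespace RetractionalSkeleton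

variable {K : Type u} [TopologicalSpace K] [T2Space K] (𝔰 : RetractionalSkeleton K)

/-- A point outside the induced set yields an increasing `ω₁`-chain of indices, continuous at
limits, along which the images of the point change at every successor step. -/
theorem exists_chain {x : K} (hx : ∀ s, 𝔰.r s x ≠ x) :
    ∃ c : Ordinal.{0} → 𝔰.Γ, (∀ ξ < ω₁, ∀ η ≤ ξ, c η ≤ c ξ) ∧
      (∀ ξ, 𝔰.r (c (ξ + 1)) x ≠ 𝔰.r (c ξ) x) ∧
      ∀ ξ < ω₁, IsSuccLimit ξ → ∀ y z, (∀ η < ξ, 𝔰.r (c η) y = 𝔰.r (c η) z) →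
        𝔰.r (c ξ) y = 𝔰.r (c ξ) z := by
  classical
  have hnext : ∀ s, ∃ t, s ≤ t ∧ 𝔰.r t x ≠ 𝔰.r s x := by
    intro s
    obtain ⟨t, ht⟩ := 𝔰.exists_ne_of_ne (hx s)
    obtain ⟨v, h1, h2⟩ := 𝔰.directed s t
    refine ⟨v, h1, fun h => ht ?_⟩
    have := 𝔰.eq_of_le h2 (x := 𝔰.r s x) (y := x)
    apply this
    rw [(𝔰.comp_eq_of_le s v h1 x).2, h]
  choose next hle hne using hnext
  let Q : ∀ ξ : Ordinal.{0}, (∀ η < ξ, 𝔰.Γ) → 𝔰.Γ → Prop := fun ξ ih t =>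
    (∀ η (h : η < ξ), ih η h ≤ t) ∧
      ∀ y z, (∀ η (h : η < ξ), 𝔰.r (ih η h) y = 𝔰.r (ih η h) z) → 𝔰.r t y = 𝔰.r t z
  let lim : ∀ ξ : Ordinal.{0}, (∀ η < ξ, 𝔰.Γ) → 𝔰.Γ := fun ξ ih =>
    if h : ∃ t, Q ξ ih t then h.choose else Classical.arbitrary _
  let c : Ordinal.{0} → 𝔰.Γ := fun ξ =>
    Ordinal.limitRecOn ξ (Classical.arbitrary _) (fun _ s => next s) (fun ξ _ ih => lim ξ ih)
  have hc_succ : ∀ ξ, c (ξ + 1) = next (c ξ) := fun ξ => Ordinal.limitRecOn_add_one ..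
  have hc_lim : ∀ ξ, IsSuccLimit ξ → c ξ = lim ξ fun η _ => c η := fun ξ h =>
    Ordinal.limitRecOn_limit _ _ _ _ h
  have main : ∀ ξ : Ordinal.{0}, ξ < ω₁ → (∀ η ≤ ξ, c η ≤ c ξ) ∧
      (IsSuccLimit ξ → Q ξ (fun η _ => c η) (c ξ)) := by
    intro ξ
    induction ξ using Ordinal.limitRecOn with
    | zero =>
      intro _
      refine ⟨fun η hη => ?_, fun h => ?_⟩
      · rw [nonpos_iff_eq_zero.1 hη]
      · exact absurd h (by simp)
    | add_one ξ ih =>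
      intro hξ
      have hξ' : ξ < ξ + 1 := lt_add_one ξ
      refine ⟨fun η hη => ?_, fun h => absurd h (by simp)⟩
      rcases hη.eq_or_lt with rfl | hη
      · exact le_rfl
      · rw [hc_succ]
        exact ((ih (hξ'.trans hξ)).1 η (Order.lt_add_one_iff.1 hη)).trans (hle _)
    | limit ξ hlim ih =>
      intro hξ
      have hQ : Q ξ (fun η _ => c η) (c ξ) := by
        have hex : ∃ t, Q ξ (fun η _ => c η) t := by
          have := (countable_Iio_of_lt_omega_one hξ).to_subtype
          have : Nonempty (Iio ξ) := ⟨⟨0, hlim.bot_lt⟩⟩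
          obtain ⟨t, ht, hsep⟩ := 𝔰.exists_isLUB_of_directed (fun η : Iio ξ => c η) (by
            intro η ζ
            rcases le_total η.1 ζ.1 with h | h
            · exact ⟨ζ, (ih ζ.1 ζ.2 (lt_trans ζ.2 hξ)).1 _ h, le_rfl⟩
            · exact ⟨η, le_rfl, (ih η.1 η.2 (lt_trans η.2 hξ)).1 _ h⟩)
          exact ⟨t, fun η h => ht.1 ⟨⟨η, h⟩, rfl⟩, fun y z h => hsep y z fun η => h η.1 η.2⟩
        have : c ξ = hex.choose := by
          rw [hc_lim ξ hlim]
          exact dif_pos hex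
        rw [this]
        exact hex.choose_spec
      refine ⟨fun η hη => ?_, fun _ => hQ⟩
      rcases hη.eq_or_lt with rfl | hη
      · exact le_rfl
      · exact hQ.1 η hη
  refine ⟨c, fun ξ hξ => (main ξ hξ).1, fun ξ => ?_, fun ξ hξ hl => ((main ξ hξ).2 hl).2⟩
  rw [hc_succ]
  exact hne _

/-- The points `X ξ`, for `ξ < ω₁`, behave like the ordinals below `ω₁` inside `K`: initial
segments are separated from the corresponding tails by continuous functions, and the points at
limits are limits of cofinal sequences. -/
theorem exists_points [CompactSpace K] {x : K} (hx : ∀ s, 𝔰.r s x ≠ x) :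
    ∃ X : Ordinal.{0} → K,
      (∀ ξ < ω₁, ∃ φ : C(K, ℝ), ∀ η < ω₁, (η ≤ ξ → φ (X η) = 0) ∧ (ξ < η → φ (X η) = 1)) ∧
      ∀ ξ < ω₁, IsSuccLimit ξ → ∀ σ : ℕ → Ordinal.{0}, Monotone σ → (∀ n, σ n < ξ) →
        (∀ η < ξ, ∃ n, η ≤ σ n) → X ξ ∈ closure (range fun n => X (σ n)) := by
  obtain ⟨c, hmono, hne, hlim⟩ := 𝔰.exists_chain hx
  refine ⟨fun ξ => 𝔰.r (c ξ) x, fun ξ hξ => ?_, fun ξ hξ hl σ hσ hσξ hcof => ?_⟩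
  · have hξ1 : ξ + 1 < ω₁ := (Cardinal.isSuccLimit_omega 1).add_one_lt hξ
    set S : Set K := {z | 𝔰.r (c ξ) z = z ∧ 𝔰.r (c (ξ + 1)) z = z} with hS
    set T : Set K := {z | 𝔰.r (c ξ) z = 𝔰.r (c ξ) x ∧
      𝔰.r (c (ξ + 1)) z = 𝔰.r (c (ξ + 1)) x} with hT
    have hSc : IsClosed S := (𝔰.isClosed_fix _).inter (𝔰.isClosed_fix _)
    have hTc : IsClosed T := (isClosed_eq (by fun_prop) (by fun_prop)).inter
      (isClosed_eq (by fun_prop) (by fun_prop))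
    have hdisj : Disjoint S T := by
      rw [Set.disjoint_left]
      rintro z ⟨h1, h2⟩ ⟨h3, h4⟩
      apply hne ξ
      rw [← h3, ← h4, h1, h2]
    obtain ⟨φ, h0, h1, -⟩ := exists_continuous_zero_one_of_isClosed hSc hTc hdisj
    refine ⟨φ, fun η hη => ⟨fun h => h0 ?_, fun h => h1 ?_⟩⟩
    · exact ⟨(𝔰.comp_eq_of_le _ _ (hmono ξ hξ η h) x).2,
        (𝔰.comp_eq_of_le _ _ (hmono (ξ + 1) hξ1 η (h.trans (lt_add_one ξ).le)) x).2⟩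
    · exact ⟨(𝔰.comp_eq_of_le _ _ (hmono η hη ξ h.le) x).1,
        (𝔰.comp_eq_of_le _ _ (hmono η hη (ξ + 1) (Order.add_one_le_of_lt h)) x).1⟩
  · obtain ⟨d, hd⟩ := exists_clusterPt_of_compactSpace
      (map (fun n => 𝔰.r (c (σ n)) x) atTop)
    have hd : MapClusterPt d atTop (fun n => 𝔰.r (c (σ n)) x) := hd
    have h1 : 𝔰.r (c ξ) d = d := by
      refine (𝔰.isClosed_fix (c ξ)).mem_of_mapClusterPt hd (Eventually.of_forall fun n => ?_)
      exact (𝔰.comp_eq_of_le _ _ (hmono ξ hξ _ (hσξ n).le) x).2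
    have h2 : 𝔰.r (c ξ) d = 𝔰.r (c ξ) x := by
      refine hlim ξ hξ hl _ _ fun η hη => ?_
      have hcl : IsClosed {z | 𝔰.r (c η) z = 𝔰.r (c η) x} :=
        isClosed_eq (by fun_prop) (by fun_prop)
      refine hcl.mem_of_mapClusterPt hd ?_
      obtain ⟨n, hn⟩ := hcof η hη
      filter_upwards [eventually_ge_atTop n] with m hm
      exact (𝔰.comp_eq_of_le _ _ (hmono (σ m) ((hσξ m).trans hξ) η (hn.trans (hσ hm))) x).1
    have h3 : d ∈ closure (range fun n => 𝔰.r (c (σ n)) x) :=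
      isClosed_closure.mem_of_mapClusterPt hd
        (Eventually.of_forall fun n => subset_closure (mem_range_self n))
    have : 𝔰.r (c ξ) x = d := h2.symm.trans h1
    simpa only [this] using h3

end RetractionalSkeleton

end Chain

/-! ### An image without a retractional skeleton -/

section Glue

open scoped Ordinal

open Order

/-- A double point `q a = q b` of a quotient `q : K → L` lies in the set induced by any skeleton of
`L`. Here `𝒜` is an algebra of functions on `K` that descend to `L` and separate the points of `L`,
and `a`, `b` are adherent to sequences `a'`, `b'` on which `g` is `0` and `1`. The function `g` need
not descend to `L`, but it does after multiplication by suitable bumps and by functions vanishing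
at `a`. Every large enough retraction `r t` sees the countably many bumps and thus preserves the
value of `g` at all `a' n` and `b' n`. If `ψ ∈ 𝒜` vanishes at `a`, then the function that `ψ * g`
induces on `L`, composed with `r t ∘ q`, is `0` at all `a' n` and agrees with `ψ ∘ r t ∘ q` at all
`b' n`. Comparing at `a` and `b` shows that `ψ` vanishes at `r t (q a)`, so `r t (q a) = q a`. -/
theorem double_point_mem {K L : Type u} [TopologicalSpace K]
    [TopologicalSpace L] [CompactSpace L] [T2Space L] (𝔰 : RetractionalSkeleton L)
    (q : C(K, L)) (hqs : Function.Surjective q) (𝒜 : Subalgebra ℝ C(K, ℝ))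
    (hdesc : ∀ φ ∈ 𝒜, ∃ φ' : C(L, ℝ), ∀ k, φ' (q k) = φ k)
    (hsep : ∀ k k', (∀ φ ∈ 𝒜, φ k = φ k') → q k = q k')
    {a b : K} (hab : q a = q b) (g : C(K, ℝ)) (a' b' : ℕ → K)
    (ha : a ∈ closure (range a')) (hb : b ∈ closure (range b'))
    (hga : ∀ n, g (a' n) = 0) (hgb : ∀ n, g (b' n) = 1)
    (hba : ∀ n, ∃ h ∈ 𝒜, h (a' n) = 1 ∧ h * g ∈ 𝒜)
    (hbb : ∀ n, ∃ h ∈ 𝒜, h (b' n) = 1 ∧ h * g ∈ 𝒜)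
    (hmul : ∀ ψ ∈ 𝒜, ψ a = 0 → ψ * g ∈ 𝒜) : q a ∈ 𝔰.inducedSet := by
  have hlarge : ∀ k : K, (∃ h ∈ 𝒜, h k = 1 ∧ h * g ∈ 𝒜) →
      ∃ s, ∀ t, s ≤ t → ∀ k', q k' = 𝔰.r t (q k) → g k' = g k := by
    rintro k ⟨h, hh, hk, hhg⟩
    obtain ⟨h₁, hh₁⟩ := hdesc _ hh
    obtain ⟨h₂, hh₂⟩ := hdesc _ hhg
    obtain ⟨s₁, hs₁⟩ := 𝔰.exists_comp_eq h₁
    obtain ⟨s₂, hs₂⟩ := 𝔰.exists_comp_eq h₂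
    obtain ⟨s, h1, h2⟩ := 𝔰.directed s₁ s₂
    refine ⟨s, fun t hst k' hk' => ?_⟩
    have e1 : h k' = 1 := by
      rw [← hh₁, hk', hs₁ t (h1.trans hst), hh₁, hk]
    have e2 : (h * g) k' = (h * g) k := by
      rw [← hh₂, hk', hs₂ t (h2.trans hst), hh₂]
    simpa [e1, hk] using e2
  choose sa hsa using fun n => hlarge _ (hba n)
  choose sb hsb using fun n => hlarge _ (hbb n)
  obtain ⟨ta, hta⟩ := 𝔰.exists_upperBound sa
  obtain ⟨tb, htb⟩ := 𝔰.exists_upperBound sb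
  obtain ⟨t, h1, h2⟩ := 𝔰.directed ta tb
  refine 𝔰.mem_inducedSet.2 ⟨t, ?_⟩
  obtain ⟨c, hc⟩ := hqs (𝔰.r t (q a))
  rw [← hc]
  apply hsep
  -- it suffices to consider functions vanishing at `a`
  have key : ∀ ψ ∈ 𝒜, ψ a = 0 → ψ c = 0 := by
    intro ψ hψ hψa
    obtain ⟨ψ₁, hψ₁⟩ := hdesc _ hψ
    obtain ⟨ψ₂, hψ₂⟩ := hdesc _ (hmul ψ hψ hψa)
    have ea : ψ₂ (𝔰.r t (q a)) = 0 := by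
      have hcl : IsClosed {k | ψ₂ (𝔰.r t (q k)) = 0} :=
        isClosed_eq (by fun_prop) continuous_const
      refine closure_minimal ?_ hcl ha
      rintro _ ⟨n, rfl⟩
      obtain ⟨k', hk'⟩ := hqs (𝔰.r t (q (a' n)))
      have := hsa n t ((hta n).trans h1) k' hk'
      change ψ₂ (𝔰.r t (q (a' n))) = 0
      rw [← hk', hψ₂, ContinuousMap.mul_apply, this, hga, mul_zero]
    have eb : ψ₂ (𝔰.r t (q b)) = ψ₁ (𝔰.r t (q b)) := by
      have hcl : IsClosed {k | ψ₂ (𝔰.r t (q k)) = ψ₁ (𝔰.r t (q k))} :=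
        isClosed_eq (by fun_prop) (by fun_prop)
      refine closure_minimal ?_ hcl hb
      rintro _ ⟨n, rfl⟩
      obtain ⟨k', hk'⟩ := hqs (𝔰.r t (q (b' n)))
      have := hsb n t ((htb n).trans h2) k' hk'
      change ψ₂ (𝔰.r t (q (b' n))) = ψ₁ (𝔰.r t (q (b' n)))
      rw [← hk', hψ₂, hψ₁, ContinuousMap.mul_apply, this, hgb, mul_one]
    rw [← hψ₁, hc, hab, ← eb, ← hab, ea]
  intro φ hφ
  have := key (φ - algebraMap ℝ C(K, ℝ) (φ a)) (𝒜.sub_mem hφ (𝒜.algebraMap_mem _)) (by simp)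
  simpa [sub_eq_zero] using this

/-- Start of the `α`-th block of length `ω + ω`. -/
def blk (α : Ordinal.{0}) : Ordinal.{0} := (ω + ω) * α

theorem omega0_add_omega0_pos : (0 : Ordinal.{0}) < ω + ω :=
  Ordinal.omega0_pos.trans (lt_add_of_pos_right _ Ordinal.omega0_pos)

theorem blk_strictMono : StrictMono blk :=
  (Ordinal.isNormal_mul_right omega0_add_omega0_pos).strictMono

theorem blk_add (α : Ordinal.{0}) : blk (α + 1) = blk α + ω + ω := by
  simp only [blk, mul_add_one, add_assoc]

theorem add_lt_omega_one {a b : Ordinal.{0}} (ha : a < ω₁) (hb : b < ω₁) : a + b < ω₁ :=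
  Ordinal.isPrincipal_add_omega 1 ha hb

theorem blk_lt {α : Ordinal.{0}} (h : α < ω₁) : blk α < ω₁ := by
  refine Ordinal.isPrincipal_mul_omega 1 ?_ h
  exact add_lt_omega_one Ordinal.omega0_lt_omega_one Ordinal.omega0_lt_omega_one

theorem le_blk (α : Ordinal.{0}) : α ≤ blk α := blk_strictMono.le_apply

theorem isSuccLimit_blk_omega : IsSuccLimit (blk ω) :=
  Ordinal.isSuccLimit_mul_right omega0_add_omega0_pos Ordinal.isSuccLimit_omega0

theorem blk_mid_lt {α β : Ordinal.{0}} (h : α < β) : blk α + ω < blk β := by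
  refine lt_of_lt_of_le ?_ (blk_strictMono.monotone (Order.add_one_le_of_lt h))
  rw [blk_add]
  exact lt_add_of_pos_right _ Ordinal.omega0_pos

theorem lt_add_omega (a : Ordinal.{0}) : a < a + ω := lt_add_of_pos_right _ Ordinal.omega0_pos

theorem exists_le_blk_nat {η : Ordinal.{0}} (h : η < blk ω) : ∃ n : ℕ, η ≤ blk n := by
  obtain ⟨c, hc, hη⟩ := (Ordinal.lt_mul_iff_of_isSuccLimit Ordinal.isSuccLimit_omega0).1 h
  obtain ⟨n, rfl⟩ := Ordinal.lt_omega0.1 hc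
  exact ⟨n, hη.le⟩

theorem exists_le_add_nat {a η : Ordinal.{0}} (h : η < a + ω) : ∃ n : ℕ, η ≤ a + n := by
  obtain ⟨c, hc, hη⟩ := (Ordinal.lt_add_iff Ordinal.omega0_ne_zero).1 h
  obtain ⟨n, rfl⟩ := Ordinal.lt_omega0.1 hc
  exact ⟨n, hη⟩

/-- Points `X ξ`, `ξ < ω₁`, behaving like a copy of `[0, ω₁)` yield a quotient without a skeleton:
glue the limit points `X (blk α + ω)` and `X (blk α + ω + ω)` for each `α`, and glue `X (blk ω)` to
a cluster point `x'` of the glued points. Every double point is in the set induced by a skeleton,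
hence so is the closure of countably many of them, in particular the class of `X (blk ω)`. That
class is thus in the closure of countably many of the double points with index at least `ω`, but a
continuous function separates it from any such countable set. -/
theorem exists_image_without_skeleton {K : Type u} [TopologicalSpace K] [CompactSpace K]
    (X : Ordinal.{0} → K)
    (hcut : ∀ ξ < ω₁, ∃ φ : C(K, ℝ), ∀ η < ω₁, (η ≤ ξ → φ (X η) = 0) ∧ (ξ < η → φ (X η) = 1))
    (hlim : ∀ ξ < ω₁, IsSuccLimit ξ → ∀ σ : ℕ → Ordinal.{0}, Monotone σ → (∀ n, σ n < ξ) →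
      (∀ η < ξ, ∃ n, η ≤ σ n) → X ξ ∈ closure (range fun n => X (σ n)))
    (hsk : ∀ (L : Type u) [TopologicalSpace L] [CompactSpace L] [T2Space L],
      (∃ f : K → L, Continuous f ∧ Function.Surjective f) → HasRetractionalSkeleton L) :
    False := by
  choose! cut hcut using hcut
  have cut0 : ∀ ξ < ω₁, ∀ η ≤ ξ, cut ξ (X η) = 0 := fun ξ hξ η h =>
    (hcut ξ hξ η (h.trans_lt hξ)).1 h
  have cut1 : ∀ η < ω₁, ∀ ξ < η, cut ξ (X η) = 1 := fun η hη ξ h =>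
    (hcut ξ (h.trans hη) η hη).2 h
  have hω : (ω : Ordinal.{0}) < ω₁ := Ordinal.omega0_lt_omega_one
  have hnat : ∀ n : ℕ, (n : Ordinal.{0}) < ω₁ := fun n => (Ordinal.natCast_lt_omega0 n).trans hω
  have hA : ∀ α < ω₁, blk α + ω < ω₁ := fun α h => add_lt_omega_one (blk_lt h) hω
  have hB : ∀ α < ω₁, blk α + ω + ω < ω₁ := fun α h => add_lt_omega_one (hA α h) hω
  have hlam : blk ω < ω₁ := blk_lt hω
  have hsucc : ∀ ξ : Ordinal.{0}, ξ < ω₁ → ξ + 1 < ω₁ := fun ξ h =>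
    add_lt_omega_one h (by simpa using hnat 1)
  have hAl : ∀ α, IsSuccLimit (blk α + ω) := fun α =>
    Ordinal.isSuccLimit_add _ Ordinal.isSuccLimit_omega0
  have hBl : ∀ α, IsSuccLimit (blk α + ω + ω) := fun α =>
    Ordinal.isSuccLimit_add _ Ordinal.isSuccLimit_omega0
  have hBle : ∀ α β, α < β → blk α + ω + ω ≤ blk β := fun α β h => by
    rw [← blk_add]; exact blk_strictMono.monotone (Order.add_one_le_of_lt h)
  have hAB : ∀ α, blk α + ω < blk α + ω + ω := fun α => lt_add_omega _
  have hsA : ∀ α, blk α < blk α + ω := fun α => lt_add_omega _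
  have hAle : ∀ α β, α ≤ β → blk α < blk β + ω := fun α β h =>
    (blk_strictMono.monotone h).trans_lt (hsA β)
  -- `x'` lies beyond all the points `X ξ`: every cut function is `1` there
  have : Nonempty (Iio (ω₁ : Ordinal.{0})) := ⟨⟨ω, hω⟩⟩
  obtain ⟨x', hx'⟩ := exists_clusterPt_of_compactSpace
    (map (fun α : Iio (ω₁ : Ordinal.{0}) => X (blk α + ω)) atTop)
  have hx' : MapClusterPt x' atTop (fun α : Iio (ω₁ : Ordinal.{0}) => X (blk α + ω)) := hx'
  have hcx : ∀ ξ < ω₁, cut ξ x' = 1 := by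
    intro ξ hξ
    have hcl : IsClosed {k | cut ξ k = 1} := isClosed_eq (by fun_prop) continuous_const
    refine hcl.mem_of_mapClusterPt hx' ?_
    filter_upwards [eventually_ge_atTop (⟨ξ, hξ⟩ : Iio (ω₁ : Ordinal.{0}))] with α hα
    have hα : ξ ≤ α := hα
    exact cut1 _ (hA _ α.2) _ ((hα.trans (le_blk _)).trans_lt (hsA _))
  have hxcl : x' ∈ closure ((fun α => X (blk α + ω)) '' {α | ω ≤ α ∧ α < ω₁}) := by
    refine isClosed_closure.mem_of_mapClusterPt hx' ?_
    filter_upwards [eventually_ge_atTop (⟨ω, hω⟩ : Iio (ω₁ : Ordinal.{0}))] with α hα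
    exact subset_closure ⟨α, ⟨hα, α.2⟩, rfl⟩
  -- the glued quotient is realised as the image of `K` in `ℝ^𝒜`, where `𝒜` is the algebra of
  -- functions respecting the gluing
  let 𝒜 : Subalgebra ℝ C(K, ℝ) :=
    { carrier := {φ | (∀ α < ω₁, φ (X (blk α + ω)) = φ (X (blk α + ω + ω))) ∧
        φ (X (blk ω)) = φ x'}
      mul_mem' := by
        rintro φ ψ ⟨h1, h2⟩ ⟨h3, h4⟩
        exact ⟨fun α hα => by simp [h1 α hα, h3 α hα], by simp [h2, h4]⟩
      add_mem' := by
        rintro φ ψ ⟨h1, h2⟩ ⟨h3, h4⟩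
        exact ⟨fun α hα => by simp [h1 α hα, h3 α hα], by simp [h2, h4]⟩
      algebraMap_mem' := fun r => ⟨fun α hα => by simp, by simp⟩ }
  have mem𝒜 : ∀ φ : C(K, ℝ), φ ∈ 𝒜 ↔
      (∀ α < ω₁, φ (X (blk α + ω)) = φ (X (blk α + ω + ω))) ∧ φ (X (blk ω)) = φ x' :=
    fun φ => Iff.rfl
  let F : K → (𝒜 → ℝ) := fun k φ => (φ : C(K, ℝ)) k
  have hF : Continuous F := continuous_pi fun φ => (φ : C(K, ℝ)).continuous
  have : CompactSpace (range F) := isCompact_iff_compactSpace.1 (isCompact_range hF)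
  let q : C(K, range F) := ⟨rangeFactorization F, hF.subtype_mk _⟩
  have hqs : Function.Surjective q := rangeFactorization_surjective
  have hdesc : ∀ φ ∈ 𝒜, ∃ φ' : C(range F, ℝ), ∀ k, φ' (q k) = φ k := fun φ hφ =>
    ⟨⟨fun z => z.1 ⟨φ, hφ⟩, (continuous_apply _).comp continuous_subtype_val⟩, fun k => rfl⟩
  have hsep : ∀ k k', (∀ φ ∈ 𝒜, φ k = φ k') → q k = q k' := fun k k' h =>
    Subtype.ext (funext fun φ => h φ.1 φ.2)
  obtain ⟨𝔰⟩ := hsk (range F) ⟨q, q.continuous, hqs⟩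
  -- cuts between blocks respect the double points
  have hcb : ∀ μ < ω₁, ∀ α < ω₁,
      cut (blk μ) (X (blk α + ω)) = cut (blk μ) (X (blk α + ω + ω)) := by
    intro μ hμ α hα
    rcases lt_or_ge α μ with h | h
    · rw [cut0 _ (blk_lt hμ) _ (hBle α μ h), cut0 _ (blk_lt hμ) _ ((hAB α).le.trans (hBle α μ h))]
    · rw [cut1 _ (hA α hα) _ (hAle μ α h), cut1 _ (hB α hα) _ ((hAle μ α h).trans (hAB α))]
  -- a bump isolating `X (ξ + 1)` from all glued points
  have hbump : ∀ ξ < ω₁, ∀ g : C(K, ℝ), ∃ h ∈ 𝒜, h (X (ξ + 1)) = 1 ∧ h * g ∈ 𝒜 := by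
    intro ξ hξ g
    have hξ1 := hsucc ξ hξ
    have h0 : ∀ η < ω₁, IsSuccLimit η → (cut ξ * (1 - cut (ξ + 1))) (X η) = 0 := by
      intro η hη hl
      rcases le_or_gt η ξ with h | h
      · simp [cut0 ξ hξ η h]
      · have : ξ + 1 < η := by simpa using hl.succ_lt h
        simp [cut1 η hη _ this]
    have h0' : (cut ξ * (1 - cut (ξ + 1))) x' = 0 := by simp [hcx _ hξ1]
    refine ⟨cut ξ * (1 - cut (ξ + 1)), (mem𝒜 _).2 ⟨fun α hα => ?_, ?_⟩, ?_,
      (mem𝒜 _).2 ⟨fun α hα => ?_, ?_⟩⟩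
    · rw [h0 _ (hA α hα) (hAl α), h0 _ (hB α hα) (hBl α)]
    · rw [h0 _ hlam isSuccLimit_blk_omega, h0']
    · simp [cut1 _ hξ1 ξ (lt_add_one ξ), cut0 _ hξ1 _ le_rfl]
    · rw [ContinuousMap.mul_apply _ g, ContinuousMap.mul_apply _ g, h0 _ (hA α hα) (hAl α),
        h0 _ (hB α hα) (hBl α), zero_mul, zero_mul]
    · rw [ContinuousMap.mul_apply _ g, ContinuousMap.mul_apply _ g,
        h0 _ hlam isSuccLimit_blk_omega, h0', zero_mul, zero_mul]
  have happ : ∀ β, β + ω < ω₁ → X (β + ω) ∈ closure (range fun n : ℕ => X (β + n + 1)) := by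
    intro β hβ
    refine hlim _ hβ (Ordinal.isSuccLimit_add _ Ordinal.isSuccLimit_omega0)
      (fun n : ℕ => β + n + 1) (fun m n hmn => ?_) (fun n => ?_) (fun η hη => ?_)
    · dsimp only; gcongr
    · rw [add_assoc]
      have : ((n : Ordinal.{0}) + 1) < ω := by exact_mod_cast Ordinal.natCast_lt_omega0 (n + 1)
      gcongr
    · obtain ⟨n, hn⟩ := exists_le_add_nat hη
      exact ⟨n, hn.trans (lt_add_one _).le⟩
  have hltn : ∀ β (n : ℕ), β + n + 1 < β + (ω : Ordinal.{0}) := by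
    intro β n
    rw [add_assoc]
    have : ((n : Ordinal.{0}) + 1) < ω := by exact_mod_cast Ordinal.natCast_lt_omega0 (n + 1)
    gcongr
  -- For `α ≥ ω` the points `X (blk ω)` and `x'` lie on different sides of `blk α + ω`; the term
  -- `1 - cut (blk ω)` makes the values at these two points agree again.
  have hg : ∀ α < ω₁, ∃ g : C(K, ℝ), (∀ n : ℕ, g (X (blk α + n + 1)) = 0) ∧
      (∀ n : ℕ, g (X (blk α + ω + n + 1)) = 1) ∧
      (∀ β < ω₁, β ≠ α → g (X (blk β + ω)) = g (X (blk β + ω + ω))) ∧ g (X (blk ω)) = g x' := by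
    intro α hα
    have e1 : ∀ n : ℕ, cut (blk α + ω) (X (blk α + n + 1)) = 0 := fun n =>
      cut0 _ (hA α hα) _ (hltn _ n).le
    have l2 : ∀ n : ℕ, blk α + ω < blk α + ω + n + 1 := fun n => by
      refine lt_of_le_of_lt ?_ (lt_add_one _)
      exact le_self_add
    have l1 : ∀ n : ℕ, blk α < blk α + n + 1 := fun n => by
      refine lt_of_le_of_lt ?_ (lt_add_one _)
      exact le_self_add
    have e2 : ∀ n : ℕ, cut (blk α + ω) (X (blk α + ω + n + 1)) = 1 := fun n =>
      cut1 _ ((hltn _ n).trans (hB α hα)) _ (l2 n)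
    have e3 : ∀ β < ω₁, β ≠ α →
        cut (blk α + ω) (X (blk β + ω)) = cut (blk α + ω) (X (blk β + ω + ω)) := by
      intro β hβ hne
      rcases lt_or_gt_of_ne hne with h | h
      · have h' := (hBle β α h).trans (hsA α).le
        rw [cut0 _ (hA α hα) _ h', cut0 _ (hA α hα) _ ((hAB β).le.trans h')]
      · have h' := (blk_mid_lt h).trans (hsA β)
        rw [cut1 _ (hA β hβ) _ h', cut1 _ (hB β hβ) _ (h'.trans (hAB β))]
    rcases lt_or_ge α ω with h | h
    · refine ⟨cut (blk α + ω), e1, e2, e3, ?_⟩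
      rw [hcx _ (hA α hα), cut1 _ hlam _ (blk_mid_lt h)]
    · have h' : blk ω ≤ blk α := blk_strictMono.monotone h
      refine ⟨cut (blk α + ω) + (1 - cut (blk ω)), fun n => ?_, fun n => ?_, fun β hβ hne => ?_, ?_⟩
      · simp [e1, cut1 _ ((hltn _ n).trans (hA α hα)) _ (h'.trans_lt (l1 n))]
      · simp [e2, cut1 _ ((hltn _ n).trans (hB α hα)) _ (h'.trans_lt ((hsA α).trans (l2 n)))]
      · simp [e3 β hβ hne, hcb ω hω β hβ]
      · simp [hcx _ (hA α hα), hcx _ hlam, cut0 _ hlam _ le_rfl,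
          cut0 _ (hA α hα) _ (h'.trans (hsA α).le)]
  have hdouble : ∀ α < ω₁, q (X (blk α + ω)) ∈ 𝔰.inducedSet := by
    intro α hα
    obtain ⟨g, g0, g1, g2, g3⟩ := hg α hα
    have hab : q (X (blk α + ω)) = q (X (blk α + ω + ω)) :=
      hsep _ _ fun φ hφ => ((mem𝒜 φ).1 hφ).1 α hα
    refine double_point_mem 𝔰 q hqs 𝒜 hdesc hsep hab g (fun n : ℕ => X (blk α + n + 1))
      (fun n : ℕ => X (blk α + ω + n + 1)) (happ _ (hA α hα)) (happ _ (hB α hα)) g0 g1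
      (fun n => hbump _ ?_ g) (fun n => hbump _ ?_ g) ?_
    · exact (lt_add_one _).trans ((hltn _ n).trans (hA α hα))
    · exact (lt_add_one _).trans ((hltn _ n).trans (hB α hα))
    · intro ψ hψ hψa
      obtain ⟨h1, h2⟩ := (mem𝒜 ψ).1 hψ
      refine (mem𝒜 _).2 ⟨fun β hβ => ?_, by simp [h2, g3]⟩
      by_cases hne : β = α
      · subst hne
        have : ψ (X (blk β + ω + ω)) = 0 := by rw [← h1 β hβ, hψa]
        simp [hψa, this]
      · simp [h1 β hβ, g2 β hβ hne]
  have hyx : q (X (blk ω)) = q x' := hsep _ _ fun φ hφ => ((mem𝒜 φ).1 hφ).2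
  have hy : X (blk ω) ∈ closure (range fun n : ℕ => X (blk n + ω)) := by
    refine hlim _ hlam isSuccLimit_blk_omega (fun n : ℕ => blk n + ω) (fun m n hmn => ?_)
      (fun n => blk_mid_lt (Ordinal.natCast_lt_omega0 n)) (fun η hη => ?_)
    · have : blk m ≤ blk n := blk_strictMono.monotone (by exact_mod_cast hmn)
      dsimp only; gcongr
    · obtain ⟨n, hn⟩ := exists_le_blk_nat hη
      exact ⟨n, hn.trans (hsA n).le⟩
  have hqy : q (X (blk ω)) ∈ 𝔰.inducedSet := by
    have h1 : (q '' range fun n : ℕ => X (blk n + ω)).Countable := (countable_range _).image _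
    refine 𝔰.closure_subset_inducedSet h1 ?_ (image_closure_subset_closure_image q.continuous
      ⟨_, hy, rfl⟩)
    rintro _ ⟨_, ⟨n, rfl⟩, rfl⟩
    exact hdouble n (hnat n)
  have hqcl : q (X (blk ω)) ∈
      closure (q '' ((fun α => X (blk α + ω)) '' {α | ω ≤ α ∧ α < ω₁})) := by
    rw [hyx]
    exact image_closure_subset_closure_image q.continuous ⟨_, hxcl, rfl⟩
  obtain ⟨C, hCS, hC, hyC⟩ := 𝔰.exists_countable_mem_closure (by
    rintro _ ⟨_, ⟨α, ⟨-, hα⟩, rfl⟩, rfl⟩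
    exact hdouble α hα) hqy hqcl
  obtain ⟨c, rfl⟩ := hC.exists_eq_range (closure_nonempty_iff.1 ⟨_, hyC⟩)
  have hc : ∀ n, ∃ α, ω ≤ α ∧ α < ω₁ ∧ q (X (blk α + ω)) = c n := by
    intro n
    obtain ⟨_, ⟨α, ⟨h1, h2⟩, rfl⟩, h3⟩ := hCS (mem_range_self n)
    exact ⟨α, h1, h2, h3⟩
  choose ι hι1 hι2 hι3 using hc
  have hμ0 : ⨆ n, ι n < ω₁ := Ordinal.iSup_lt_omega_one hι2
  set μ := (⨆ n, ι n) + 1 with hμdef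
  have hμ : μ < ω₁ := hsucc _ hμ0
  have hιμ : ∀ n, ι n < μ := fun n => (Ordinal.le_iSup ι n).trans_lt (lt_add_one _)
  have hωμ : ω ≤ μ := (hι1 0).trans (hιμ 0).le
  obtain ⟨φ', hφ'⟩ := hdesc ((1 - cut (blk ω)) + cut (blk μ)) ((mem𝒜 _).2 ⟨fun α hα => by
      simp [hcb ω hω α hα, hcb μ hμ α hα], by
      simp [hcx _ hlam, hcx _ (blk_lt hμ), cut0 _ hlam _ le_rfl,
        cut0 _ (blk_lt hμ) _ (blk_strictMono.monotone hωμ)]⟩)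
  have hz : φ' (q (X (blk ω))) = 0 := by
    have hcl : IsClosed {z | φ' z = 0} := isClosed_eq (by fun_prop) continuous_const
    refine closure_minimal ?_ hcl hyC
    rintro _ ⟨n, rfl⟩
    change φ' (c n) = 0
    rw [← hι3, hφ']
    simp [cut1 _ (hA _ (hι2 n)) _ (hAle _ _ (hι1 n)), cut0 _ (blk_lt hμ) _ (blk_mid_lt (hιμ n)).le]
  rw [hφ'] at hz
  simp [cut0 _ hlam _ le_rfl, cut0 _ (blk_lt hμ) _ (blk_strictMono.monotone hωμ)] at hz

end Glue

/-- A compact Hausdorff space `K` is Corson compact if and only if every continuous image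
of `K` has a retractional skeleton. -/
theorem corson_iff_every_image_hasRetractionalSkeleton
    (K : Type u) [TopologicalSpace K] [CompactSpace K] [T2Space K] :
    IsCorsonCompact K ↔
      ∀ (L : Type u) [TopologicalSpace L] [CompactSpace L] [T2Space L],
        (∃ f : K → L, Continuous f ∧ Function.Surjective f) → HasRetractionalSkeleton L := by
  constructor
  · rintro ⟨I, A, -, hA, ⟨h⟩⟩ L _ _ _ ⟨f, hf, hfs⟩
    exact hasRetractionalSkeleton_image (e := fun k => (h k : I → ℝ))
      (continuous_subtype_val.comp h.continuous) (Subtype.val_injective.comp h.injective)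
      (fun x => hA _ (h x).2) hf hfs
  · intro hsk
    obtain ⟨𝔰⟩ := hsk K ⟨id, continuous_id, Function.surjective_id⟩
    by_cases hfull : ∀ x, ∃ s, 𝔰.r s x = x
    · exact RetractionalSkeleton.isCorsonCompact_of_full hfull
    · push Not at hfull
      obtain ⟨x, hx⟩ := hfull
      obtain ⟨X, hcut, hlim⟩ := 𝔰.exists_points hx
      exact (exists_image_without_skeleton X hcut hlim hsk).elim
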